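/- arXiv:1209.4945 — 3 statements merged into one kernel-verified Lean document; each statement's English description precedes it below -/
import Mathlib

section
/- Let χ be an extreme unipotent trace of A(GLB), normalized so that χ(I_B) = 1. Then for every n, m ≥ 1 and every a ∈ GL(n,q), b ∈ GL(m,q) whose characteristic polynomials are coprime, one has χ([e_{a⊙b}]) = χ([e_a])·χ([e_b]), where a⊙b ∈ GL(n+m,q) is the block-diagonal matrix with diagonal blocks a and b. (Multiplicativity theorem for unipotent traces, Theorem 3.3.) -/
/-!
STATEMENT 0 (Theorem 3.3, multiplicativity of extreme unipotent traces of A(GLB)).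
-/

open scoped ComplexOrder

variable (F : Type) [Field F] [Fintype F] [DecidableEq F]

/-- `GL(n,q)`, the group of invertible `n × n` matrices over the finite field `F` (`q = |F|`). -/
abbrev GLn (n : ℕ) := GL (Fin n) F

/-- The complex group algebra `ℂ[GL(n,q)]`. -/
abbrev GA (n : ℕ) := MonoidAlgebra ℂ (GLn F n)

/-- `b` is an invertible upper-triangular matrix, i.e. an element of the Borel subgroup `B_n`. -/
def IsUT {n : ℕ} (b : GLn F n) : Prop :=
  ∀ i j : Fin n, j < i → (b : Matrix (Fin n) (Fin n) F) i j = 0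

open scoped Classical in
/-- `Ext(g)`: the set of `h ∈ GL(n+1,q)` whose top-left `n × n` corner is `g` and whose last
row vanishes except possibly at the `(n+1,n+1)` entry. -/
noncomputable def ExtSet {n : ℕ} (g : GLn F n) : Finset (GLn F (n + 1)) :=
  Finset.univ.filter (fun h =>
    (∀ i j : Fin n, (h : Matrix (Fin (n + 1)) (Fin (n + 1)) F) i.castSucc j.castSucc
        = (g : Matrix (Fin n) (Fin n) F) i j) ∧
    (∀ j : Fin n, (h : Matrix (Fin (n + 1)) (Fin (n + 1)) F) (Fin.last n) j.castSucc = 0))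

/-- The parabolic embedding `i_n : ℂ[GL(n,q)] → ℂ[GL(n+1,q)]`,
`e_g ↦ (1/((q-1)q^n)) ∑_{h ∈ Ext(g)} e_h`. -/
noncomputable def paraEmb (n : ℕ) : GA F n →ₗ[ℂ] GA F (n + 1) :=
  (Finsupp.lsum ℂ (fun g => LinearMap.toSpanSingleton ℂ (GA F (n + 1))
    ((((Fintype.card F : ℂ) - 1) * (Fintype.card F : ℂ) ^ n)⁻¹ •
      ∑ h ∈ ExtSet F g, MonoidAlgebra.single h (1 : ℂ)))).comp
    (MonoidAlgebra.coeffLinearEquiv ℂ).toLinearMap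

/-- Character of a matrix representation, as a linear functional on the group algebra. -/
noncomputable def charFun {n d : ℕ} (ρ : Representation ℂ (GLn F n) (Fin d → ℂ))
    (a : GA F n) : ℂ :=
  Finsupp.sum a.coeff (fun g c => c * LinearMap.trace ℂ (Fin d → ℂ) (ρ g))

/-- `ρ` is an irreducible representation of `GL(n,q)` which is unipotent, i.e. possesses a
nonzero `B_n`-invariant vector. -/
def IsUnipotentIrrep {n d : ℕ} (ρ : Representation ℂ (GLn F n) (Fin d → ℂ)) : Prop :=
  (∀ W : Submodule ℂ (Fin d → ℂ), (∀ (g : GLn F n), ∀ v ∈ W, ρ g v ∈ W) → W = ⊥ ∨ W = ⊤) ∧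
  (∃ v : Fin d → ℂ, v ≠ 0 ∧ ∀ b : GLn F n, IsUT F b → ρ b v = v)

/-- A functional on `ℂ[GL(n,q)]` is unipotent if it is a linear combination of characters of
irreducible unipotent representations of `GL(n,q)`. -/
def IsUnipotentFunctional {n : ℕ} (φ : GA F n → ℂ) : Prop :=
  ∃ (k : ℕ) (c : Fin k → ℂ) (d : Fin k → ℕ)
    (ρ : (i : Fin k) → Representation ℂ (GLn F n) (Fin (d i) → ℂ)),
    (∀ i, IsUnipotentIrrep F (ρ i)) ∧ ∀ a : GA F n, φ a = ∑ i, c i * charFun F (ρ i) a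

section Abstract
variable {A : Type} [NonUnitalRing A] [Module ℂ A] [SMulCommClass ℂ A A] [IsScalarTower ℂ A A]
  [StarRing A] [StarModule ℂ A]

/-- A trace of a non-unital `*`-algebra: a central positive-definite linear functional. -/
def IsTrace (χ : A →ₗ[ℂ] ℂ) : Prop :=
  (∀ x y : A, χ (x * y) = χ (y * x)) ∧ (∀ x : A, 0 ≤ χ (star x * x))

/-- A nonzero trace is extreme if any decomposition into a sum of two traces is trivial. -/
def IsExtremeTrace (χ : A →ₗ[ℂ] ℂ) : Prop :=
  IsTrace χ ∧ χ ≠ 0 ∧ ∀ χ₁ χ₂ : A →ₗ[ℂ] ℂ, IsTrace χ₁ → IsTrace χ₂ → χ = χ₁ + χ₂ →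
    ∃ c₁ c₂ : ℝ, 0 ≤ c₁ ∧ 0 ≤ c₂ ∧ χ₁ = (c₁ : ℂ) • χ ∧ χ₂ = (c₂ : ℂ) • χ
end Abstract

/-- Block-diagonal matrix `a ⊙ b ∈ GL(n+m,q)` with blocks `a ∈ GL(n,q)` and `b ∈ GL(m,q)`. -/
noncomputable def blockDiagGL {n m : ℕ} (a : GLn F n) (b : GLn F m) : GLn F (n + m) :=
  Matrix.GeneralLinearGroup.mkOfDetNeZero
    ((Matrix.fromBlocks (a : Matrix (Fin n) (Fin n) F) 0 0 (b : Matrix (Fin m) (Fin m) F)).submatrix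
      finSumFinEquiv.symm finSumFinEquiv.symm)
    (by
      rw [Matrix.det_submatrix_equiv_self, Matrix.det_fromBlocks_zero₂₁]
      exact mul_ne_zero
        (((Matrix.isUnit_iff_isUnit_det _).mp a.isUnit).ne_zero)
        (((Matrix.isUnit_iff_isUnit_det _).mp b.isUnit).ne_zero))

section TransposeConj
open Polynomial

theorem exists_frob_functional {K : Type} [Field K] (p : K[X]) (hp : Irreducible p) (e : ℕ) :
    ∃ l : (K[X] ⧸ Ideal.span {p ^ e}) →ₗ[K] K,
      ∀ a : K[X] ⧸ Ideal.span {p ^ e}, (∀ b, l (a * b) = 0) → a = 0 := by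
  classical
  rcases e with _ | k
  · refine ⟨0, fun a _ => ?_⟩
    obtain ⟨f, rfl⟩ := Ideal.Quotient.mk_surjective a
    rw [Ideal.Quotient.eq_zero_iff_mem]
    simp
  · set Q := K[X] ⧸ Ideal.span {p ^ (k + 1)}
    have hc : (Ideal.Quotient.mk (Ideal.span {p ^ (k + 1)}) (p ^ k) : Q) ≠ 0 := by
      intro h
      rw [Ideal.Quotient.eq_zero_iff_mem, Ideal.mem_span_singleton] at h
      have := (pow_dvd_pow_iff hp.ne_zero hp.not_isUnit).1 h
      omega
    obtain ⟨l, hl⟩ : ∃ l : Module.Dual K Q, l (Ideal.Quotient.mk _ (p ^ k)) ≠ 0 := by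
      by_contra h
      push Not at h
      exact hc ((Module.forall_dual_apply_eq_zero_iff K _).1 h)
    refine ⟨l, fun a ha => ?_⟩
    by_contra hane
    obtain ⟨f, rfl⟩ := Ideal.Quotient.mk_surjective a
    have hnd : ¬ p ^ (k + 1) ∣ f := by
      rwa [Ideal.Quotient.eq_zero_iff_mem, Ideal.mem_span_singleton] at hane
    have hg : EuclideanDomain.gcd f (p ^ (k + 1)) ∣ p ^ (k + 1) := EuclideanDomain.gcd_dvd_right _ _
    obtain ⟨j, hj, hja⟩ := (dvd_prime_pow hp.prime (k + 1)).1 hg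
    have hjk : j ≤ k := by
      by_contra hlt
      have : j = k + 1 := by omega
      subst this
      exact hnd (hja.symm.dvd.trans (EuclideanDomain.gcd_dvd_left _ _))
    have hdvd : EuclideanDomain.gcd f (p ^ (k + 1)) ∣ p ^ k :=
      hja.dvd.trans (pow_dvd_pow _ hjk)
    obtain ⟨c, hc'⟩ := hdvd
    rw [EuclideanDomain.gcd_eq_gcd_ab] at hc'
    apply hl
    have : (Ideal.Quotient.mk (Ideal.span {p ^ (k + 1)}) (p ^ k) : Q)
        = Ideal.Quotient.mk _ f * Ideal.Quotient.mk _ (EuclideanDomain.gcdA f (p ^ (k + 1)) * c) := by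
      rw [hc', ← map_mul, Ideal.Quotient.mk_eq_mk_iff_sub_mem, Ideal.mem_span_singleton]
      exact ⟨EuclideanDomain.gcdB f (p ^ (k + 1)) * c, by ring⟩
    rw [this]
    exact ha _

theorem exists_transpose_conj {K : Type} [Field K] {n : ℕ} (M : Matrix (Fin n) (Fin n) K) :
    ∃ S : Matrix (Fin n) (Fin n) K, S.det ≠ 0 ∧ M.transpose * S = S * M := by
  classical
  set T : Module.End K (Fin n → K) := Matrix.toLin' M with hT
  have htors : Module.IsTorsion K[X] (Module.AEval' T) := by
    intro x
    refine ⟨⟨minpoly K T, mem_nonZeroDivisors_of_ne_zero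
      (minpoly.ne_zero (Algebra.IsIntegral.isIntegral T))⟩, ?_⟩
    change minpoly K T • x = 0
    apply (Module.AEval'.of T).symm.injective
    rw [Module.AEval.of_symm_smul]
    simp
  obtain ⟨I, _, p, hp, e, ⟨Φ⟩⟩ := Module.equiv_directSum_of_isTorsion htors
  choose l hl using fun i => exists_frob_functional (p i) (hp i) (e i)
  let co : ∀ i, (Fin n → K) →ₗ[K] (K[X] ⧸ Ideal.span {p i ^ e i}) := fun i =>
    { toFun := fun v => (Φ (Module.AEval'.of T v) i : K[X] ⧸ Ideal.span {p i ^ e i})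
      map_add' := by intro v w; simp
      map_smul' := by
        intro c v
        have h1 : Module.AEval'.of T (c • v) = (C c : K[X]) • Module.AEval'.of T v := by
          rw [Module.AEval.C_smul, map_smul]
        rw [h1, map_smul, DirectSum.smul_apply]
        simp only [RingHom.id_apply]
        rw [← algebraMap_smul K[X] c]
        rfl }
  have hcoT : ∀ i v, co i (T v) = Ideal.Quotient.mk _ X * co i v := by
    intro i v
    have h1 : Module.AEval'.of T (T v) = (X : K[X]) • Module.AEval'.of T v := by
      rw [Module.AEval'.X_smul_of]
    change Φ (Module.AEval'.of T (T v)) i = _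
    rw [h1, map_smul, DirectSum.smul_apply]
    rfl
  let B : (Fin n → K) →ₗ[K] (Fin n → K) →ₗ[K] K :=
    ∑ i, ((LinearMap.mul K (K[X] ⧸ Ideal.span {p i ^ e i})).compl₁₂ (co i) (co i)).compr₂ (l i)
  have hB : ∀ v w, B v w = ∑ i, l i (co i v * co i w) := by
    intro v w
    simp [B, LinearMap.sum_apply]
  have hBM : Matrix.toLinearMap₂' K (LinearMap.toMatrix₂' K B) = B := by simp
  refine ⟨LinearMap.toMatrix₂' K B, ?_, ?_⟩
  · rw [← LinearMap.separatingLeft_toLinearMap₂'_iff_det_ne_zero, hBM]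
    intro v hv
    have h0 : ∀ i, co i v = 0 := by
      intro i
      apply hl i
      intro b
      have := hv ((Module.AEval'.of T).symm (Φ.symm (DirectSum.of (fun i => K[X] ⧸ K[X] ∙ p i ^ e i) i b)))
      rw [hB, Finset.sum_eq_single i] at this
      · convert this using 3
        simp [co]
      · intro j _ hj
        have : co j ((Module.AEval'.of T).symm (Φ.symm
            (DirectSum.of (fun i => K[X] ⧸ K[X] ∙ p i ^ e i) i b))) = 0 := by
          simp only [co, LinearMap.coe_mk, AddHom.coe_mk, LinearEquiv.apply_symm_apply]
          exact DirectSum.of_eq_of_ne _ _ _ hj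
        rw [this, mul_zero, map_zero]
      · simp
    have h1 : Φ (Module.AEval'.of T v) = 0 := by
      apply DFinsupp.ext
      intro i
      exact h0 i
    simpa using h1
  · have : LinearMap.IsAdjointPair (Matrix.toLinearMap₂' K (LinearMap.toMatrix₂' K B))
        (Matrix.toLinearMap₂' K (LinearMap.toMatrix₂' K B)) (Matrix.toLin' M) (Matrix.toLin' M) := by
      rw [hBM]
      intro x y
      rw [hB, hB]
      refine Finset.sum_congr rfl fun i _ => ?_
      rw [← hT, hcoT, hcoT]
      ring_nf
    exact (isAdjointPair_toLinearMap₂' _ _ _ _).1 this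

end TransposeConj

set_option linter.unusedSectionVars false
set_option linter.unusedSimpArgs false
section Blocks
variable {F}

theorem gl_mul_inv {n : ℕ} (a : GLn F n) :
    (a : Matrix (Fin n) (Fin n) F) * ((a⁻¹ : GLn F n) : Matrix (Fin n) (Fin n) F) = 1 := by
  rw [← Units.val_mul]; simp
theorem gl_inv_mul {n : ℕ} (a : GLn F n) :
    ((a⁻¹ : GLn F n) : Matrix (Fin n) (Fin n) F) * (a : Matrix (Fin n) (Fin n) F) = 1 := by
  rw [← Units.val_mul]; simp

/-- Block upper triangular matrix with diagonal blocks `a`, `b`. -/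
noncomputable def blk {n m : ℕ} (a : GLn F n) (u : Matrix (Fin n) (Fin m) F) (b : GLn F m) :
    GLn F (n + m) :=
  Matrix.GeneralLinearGroup.mkOfDetNeZero
    ((Matrix.fromBlocks (a : Matrix (Fin n) (Fin n) F) u 0 (b : Matrix (Fin m) (Fin m) F)).submatrix
      finSumFinEquiv.symm finSumFinEquiv.symm)
    (by
      rw [Matrix.det_submatrix_equiv_self, Matrix.det_fromBlocks_zero₂₁]
      exact mul_ne_zero
        (((Matrix.isUnit_iff_isUnit_det _).mp a.isUnit).ne_zero)
        (((Matrix.isUnit_iff_isUnit_det _).mp b.isUnit).ne_zero))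

theorem blk_coe {n m : ℕ} (a : GLn F n) (u : Matrix (Fin n) (Fin m) F) (b : GLn F m) :
    (blk a u b : Matrix (Fin (n + m)) (Fin (n + m)) F) =
      (Matrix.fromBlocks (a : Matrix (Fin n) (Fin n) F) u 0
        (b : Matrix (Fin m) (Fin m) F)).submatrix finSumFinEquiv.symm finSumFinEquiv.symm := rfl

theorem blk_zero {n m : ℕ} (a : GLn F n) (b : GLn F m) : blk a 0 b = blockDiagGL F a b := rfl

theorem blk_mul {n m : ℕ} (a a' : GLn F n) (u u' : Matrix (Fin n) (Fin m) F) (b b' : GLn F m) :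
    blk a u b * blk a' u' b' = blk (a * a') ((a : Matrix (Fin n) (Fin n) F) * u' +
      u * (b' : Matrix (Fin m) (Fin m) F)) (b * b') := by
  apply Units.ext
  rw [Units.val_mul, blk_coe, blk_coe, blk_coe, Matrix.submatrix_mul_equiv,
    Matrix.fromBlocks_multiply]
  simp

theorem blk_one {n m : ℕ} : blk (1 : GLn F n) 0 (1 : GLn F m) = 1 := by
  apply Units.ext
  rw [blk_coe]
  simp

theorem blk_inv {n m : ℕ} (a : GLn F n) (u : Matrix (Fin n) (Fin m) F) (b : GLn F m) :
    (blk a u b)⁻¹ = blk a⁻¹ (-((a⁻¹ : GLn F n) : Matrix (Fin n) (Fin n) F) * u *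
      ((b⁻¹ : GLn F m) : Matrix (Fin m) (Fin m) F)) b⁻¹ := by
  rw [inv_eq_iff_mul_eq_one, blk_mul, ← blk_one]
  congr 1
  · simp
  · rw [Matrix.mul_assoc, Matrix.neg_mul, Matrix.mul_neg, ← Matrix.mul_assoc, gl_mul_inv]
    simp
  · simp

theorem blk_apply₁₁ {n m : ℕ} (a : GLn F n) (u : Matrix (Fin n) (Fin m) F) (b : GLn F m) (i j) :
    (blk a u b : Matrix (Fin (n + m)) (Fin (n + m)) F) (Fin.castAdd m i) (Fin.castAdd m j)
      = (a : Matrix (Fin n) (Fin n) F) i j := by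
  simp [blk_coe]
theorem blk_apply₁₂ {n m : ℕ} (a : GLn F n) (u : Matrix (Fin n) (Fin m) F) (b : GLn F m) (i j) :
    (blk a u b : Matrix (Fin (n + m)) (Fin (n + m)) F) (Fin.castAdd m i) (Fin.natAdd n j)
      = u i j := by
  simp [blk_coe]
theorem blk_apply₂₁ {n m : ℕ} (a : GLn F n) (u : Matrix (Fin n) (Fin m) F) (b : GLn F m) (i j) :
    (blk a u b : Matrix (Fin (n + m)) (Fin (n + m)) F) (Fin.natAdd n i) (Fin.castAdd m j)
      = 0 := by
  simp [blk_coe]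
theorem blk_apply₂₂ {n m : ℕ} (a : GLn F n) (u : Matrix (Fin n) (Fin m) F) (b : GLn F m) (i j) :
    (blk a u b : Matrix (Fin (n + m)) (Fin (n + m)) F) (Fin.natAdd n i) (Fin.natAdd n j)
      = (b : Matrix (Fin m) (Fin m) F) i j := by
  simp [blk_coe]

theorem exists_blk {n m : ℕ} (h : GLn F (n + m))
    (h0 : ∀ i j, (h : Matrix (Fin (n + m)) (Fin (n + m)) F) (Fin.natAdd n i) (Fin.castAdd m j) = 0) :
    ∃ a u b, h = blk a u b := by
  set H : Matrix (Fin n ⊕ Fin m) (Fin n ⊕ Fin m) F :=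
    (h : Matrix (Fin (n + m)) (Fin (n + m)) F).submatrix finSumFinEquiv finSumFinEquiv with hH
  have h21 : H.toBlocks₂₁ = 0 := by
    ext i j
    simpa [H, Matrix.toBlocks₂₁] using h0 i j
  have hfb : H = Matrix.fromBlocks H.toBlocks₁₁ H.toBlocks₁₂ 0 H.toBlocks₂₂ := by
    rw [← h21, Matrix.fromBlocks_toBlocks]
  have hdet : H.det ≠ 0 := by
    rw [hH, Matrix.det_submatrix_equiv_self]
    exact ((Matrix.isUnit_iff_isUnit_det _).mp h.isUnit).ne_zero
  rw [hfb, Matrix.det_fromBlocks_zero₂₁] at hdet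
  refine ⟨Matrix.GeneralLinearGroup.mkOfDetNeZero _ (left_ne_zero_of_mul hdet), H.toBlocks₁₂,
    Matrix.GeneralLinearGroup.mkOfDetNeZero _ (right_ne_zero_of_mul hdet), ?_⟩
  apply Units.ext
  rw [blk_coe]
  change _ = (Matrix.fromBlocks H.toBlocks₁₁ H.toBlocks₁₂ 0 H.toBlocks₂₂).submatrix _ _
  rw [← hfb, hH]
  ext i j
  simp

theorem blk_injective {n m : ℕ} {a a' : GLn F n} {u u' : Matrix (Fin n) (Fin m) F} {b b' : GLn F m}
    (h : blk a u b = blk a' u' b') : a = a' ∧ u = u' ∧ b = b' := by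
  refine ⟨?_, ?_, ?_⟩
  · apply Units.ext; ext i j
    rw [← blk_apply₁₁ a u b, h, blk_apply₁₁]
  · ext i j
    rw [← blk_apply₁₂ a u b, h, blk_apply₁₂]
  · apply Units.ext; ext i j
    rw [← blk_apply₂₂ a u b, h, blk_apply₂₂]

/-- average over the unipotent radical -/
noncomputable def avgblk {n m : ℕ} (a : GLn F n) (b : GLn F m) : GA F (n + m) :=
  ((Fintype.card F : ℂ) ^ (n * m))⁻¹ • ∑ u : Matrix (Fin n) (Fin m) F,
    MonoidAlgebra.single (blk a u b) (1 : ℂ)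

/-- parabolic product -/
noncomputable def circ {n m : ℕ} : GA F n →ₗ[ℂ] GA F m →ₗ[ℂ] GA F (n + m) :=
  LinearMap.mk₂ ℂ (fun x y => ∑ a, ∑ b, (x.coeff a * y.coeff b) • avgblk a b)
    (by intro x x' y; simp [add_mul, add_smul, Finset.sum_add_distrib])
    (by intro c x y; simp [Finset.smul_sum, smul_smul, mul_assoc])
    (by intro x y y'; simp [mul_add, add_smul, Finset.sum_add_distrib])
    (by intro c x y; simp [Finset.smul_sum, smul_smul, mul_left_comm])

theorem circ_single {n m : ℕ} (a : GLn F n) (b : GLn F m) (r s : ℂ) :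
    circ (MonoidAlgebra.single a r) (MonoidAlgebra.single b s) = (r * s) • avgblk a b := by
  simp only [circ, LinearMap.mk₂_apply, MonoidAlgebra.coeff_single]
  rw [Finset.sum_eq_single a, Finset.sum_eq_single b]
  · simp
  · intro b' _ hb; simp [Finsupp.single_apply, hb.symm]
  · simp
  · intro a' _ ha; simp [Finsupp.single_apply, ha.symm]
  · simp

theorem avgblk_mul_blk {n m : ℕ} (a a' : GLn F n) (u' : Matrix (Fin n) (Fin m) F) (b b' : GLn F m) :
    avgblk a b * MonoidAlgebra.single (blk a' u' b') 1 = avgblk (a * a') (b * b') := by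
  unfold avgblk
  rw [smul_mul_assoc, Finset.sum_mul]
  congr 1
  simp only [MonoidAlgebra.single_mul_single, blk_mul, mul_one]
  let e : Matrix (Fin n) (Fin m) F ≃ Matrix (Fin n) (Fin m) F :=
    { toFun := fun u => (a : Matrix (Fin n) (Fin n) F) * u' + u * (b' : Matrix (Fin m) (Fin m) F)
      invFun := fun w => (w - (a : Matrix (Fin n) (Fin n) F) * u') *
        ((b'⁻¹ : GLn F m) : Matrix (Fin m) (Fin m) F)
      left_inv := by
        intro u
        simp only [add_sub_cancel_left]
        rw [Matrix.mul_assoc, gl_mul_inv]; simp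
      right_inv := by
        intro u
        simp only
        rw [Matrix.mul_assoc, gl_inv_mul]; simp }
  exact Equiv.sum_comp e (fun u => MonoidAlgebra.single (blk (a * a') u (b * b')) (1 : ℂ))

theorem card_ne : (Fintype.card F : ℂ) ≠ 0 := by
  exact_mod_cast Fintype.card_ne_zero

theorem avgblk_mul {n m : ℕ} (a a' : GLn F n) (b b' : GLn F m) :
    avgblk a b * avgblk a' b' = avgblk (a * a') (b * b') := by
  conv_lhs => rw [avgblk.eq_def a' b']
  rw [mul_smul_comm, Finset.mul_sum]
  simp only [avgblk_mul_blk]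
  rw [Finset.sum_const, Finset.card_univ, show Fintype.card (Matrix (Fin n) (Fin m) F) = Fintype.card F ^ (n * m) from by
      change Fintype.card (Fin n → Fin m → F) = _
      simp [← pow_mul, mul_comm], ← Nat.cast_smul_eq_nsmul ℂ, smul_smul]
  simp only [Fintype.card_fin, Nat.cast_pow]
  rw [inv_mul_cancel₀ (pow_ne_zero _ card_ne), one_smul]

theorem circ_mul_blk {n m : ℕ} (x : GA F n) (y : GA F m) (a' : GLn F n)
    (u' : Matrix (Fin n) (Fin m) F) (b' : GLn F m) :
    circ x y * MonoidAlgebra.single (blk a' u' b') 1 =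
      circ (x * MonoidAlgebra.single a' 1) (y * MonoidAlgebra.single b' 1) := by
  induction x using MonoidAlgebra.induction_linear with
  | zero => simp
  | add x x' hx hx' => simp only [map_add, LinearMap.add_apply, add_mul, hx, hx']
  | single a r =>
    induction y using MonoidAlgebra.induction_linear with
    | zero => simp
    | add y y' hx hx' => simp only [map_add, add_mul, hx, hx']
    | single b s =>
      simp only [MonoidAlgebra.single_mul_single, circ_single, smul_mul_assoc, avgblk_mul_blk, mul_one]

theorem circ_mul {n m : ℕ} (x x' : GA F n) (y y' : GA F m) :
    circ x y * circ x' y' = circ (x * x') (y * y') := by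
  induction x using MonoidAlgebra.induction_linear with
  | zero => simp
  | add x z hx hx' => simp only [map_add, LinearMap.add_apply, add_mul, hx, hx']
  | single a r =>
  induction y using MonoidAlgebra.induction_linear with
  | zero => simp
  | add y y' hx hx' => simp only [map_add, add_mul, hx, hx']
  | single b s =>
  induction x' using MonoidAlgebra.induction_linear with
  | zero => simp
  | add x z hx hx' => simp only [map_add, LinearMap.add_apply, mul_add, hx, hx']
  | single a' r' =>
  induction y' using MonoidAlgebra.induction_linear with
  | zero => simp
  | add y y' hx hx' => simp only [map_add, mul_add, hx, hx']
  | single b' s' =>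
  simp only [MonoidAlgebra.single_mul_single, circ_single, smul_mul_assoc, avgblk_mul,
    mul_smul_comm, smul_smul]
  congr 1; ring

/-- conjugate-linear involution of a group algebra -/
noncomputable def st {G : Type} [Group G] [Fintype G] (x : MonoidAlgebra ℂ G) : MonoidAlgebra ℂ G :=
  ∑ g, MonoidAlgebra.single g⁻¹ (star (x.coeff g))

section st
variable {G : Type} [Group G] [Fintype G]
theorem st_add (x y : MonoidAlgebra ℂ G) : st (x + y) = st x + st y := by
  simp [st, Finset.sum_add_distrib]
theorem st_smul (c : ℂ) (x : MonoidAlgebra ℂ G) : st (c • x) = star c • st x := by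
  simp [st, Finset.smul_sum]
theorem st_zero : st (0 : MonoidAlgebra ℂ G) = 0 := by
  simp [st]
theorem st_single (g : G) (c : ℂ) : st (MonoidAlgebra.single g c) = MonoidAlgebra.single g⁻¹ (star c) := by
  classical
  unfold st
  rw [Finset.sum_eq_single g]
  · simp
  · intro b _ hb; simp [Finsupp.single_apply, hb.symm]
  · simp
theorem st_sum {I : Type} (s : Finset I) (x : I → MonoidAlgebra ℂ G) :
    st (∑ i ∈ s, x i) = ∑ i ∈ s, st (x i) := by
  classical
  induction s using Finset.induction_on with
  | empty => simp [st_zero]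
  | insert a s ha ih => rw [Finset.sum_insert ha, Finset.sum_insert ha, st_add, ih]
theorem st_mul (x y : MonoidAlgebra ℂ G) : st (x * y) = st y * st x := by
  induction x using MonoidAlgebra.induction_linear with
  | zero => simp [st_zero]
  | add x z hx hx' => simp only [add_mul, mul_add, st_add, hx, hx']
  | single a r =>
  induction y using MonoidAlgebra.induction_linear with
  | zero => simp [st_zero]
  | add y y' hx hx' => simp only [add_mul, mul_add, st_add, hx, hx']
  | single b s =>
  simp [MonoidAlgebra.single_mul_single, st_single, mul_comm]
theorem st_st (x : MonoidAlgebra ℂ G) : st (st x) = x := by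
  induction x using MonoidAlgebra.induction_linear with
  | zero => simp [st_zero]
  | add x z hx hx' => simp only [st_add, hx, hx']
  | single a r => simp [st_single]
end st

theorem st_avgblk {n m : ℕ} (a : GLn F n) (b : GLn F m) :
    st (avgblk a b) = avgblk a⁻¹ b⁻¹ := by
  unfold avgblk
  rw [st_smul, st_sum]
  congr 1
  · simp
  simp only [st_single, blk_inv, star_one]
  let e : Matrix (Fin n) (Fin m) F ≃ Matrix (Fin n) (Fin m) F :=
    { toFun := fun u => -((a⁻¹ : GLn F n) : Matrix (Fin n) (Fin n) F) * u *
        ((b⁻¹ : GLn F m) : Matrix (Fin m) (Fin m) F)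
      invFun := fun u => -(a : Matrix (Fin n) (Fin n) F) * u * (b : Matrix (Fin m) (Fin m) F)
      left_inv := by
        intro u
        simp only [Matrix.neg_mul, Matrix.mul_neg, neg_neg]
        rw [Matrix.mul_assoc, Matrix.mul_assoc, gl_inv_mul, Matrix.mul_one, ← Matrix.mul_assoc, gl_mul_inv]; simp
      right_inv := by
        intro u
        simp only [Matrix.neg_mul, Matrix.mul_neg, neg_neg]
        rw [Matrix.mul_assoc, Matrix.mul_assoc, gl_mul_inv, Matrix.mul_one, ← Matrix.mul_assoc, gl_inv_mul]; simp }
  exact Equiv.sum_comp e (fun u => MonoidAlgebra.single (blk a⁻¹ u b⁻¹) (1 : ℂ))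

theorem st_circ {n m : ℕ} (x : GA F n) (y : GA F m) : st (circ x y) = circ (st x) (st y) := by
  induction x using MonoidAlgebra.induction_linear with
  | zero => simp [st_zero]
  | add x z hx hx' => simp only [map_add, LinearMap.add_apply, st_add, hx, hx']
  | single a r =>
  induction y using MonoidAlgebra.induction_linear with
  | zero => simp [st_zero]
  | add y y' hx hx' => simp only [map_add, st_add, hx, hx']
  | single b s =>
  simp only [st_single, circ_single, st_smul, st_avgblk, star_mul']

end Blocks

section Para
variable {F}

theorem mem_ExtSet {n : ℕ} (g : GLn F n) (h : GLn F (n + 1)) : h ∈ ExtSet F g ↔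
    (∀ i j : Fin n, (h : Matrix (Fin (n + 1)) (Fin (n + 1)) F) i.castSucc j.castSucc
        = (g : Matrix (Fin n) (Fin n) F) i j) ∧
    (∀ j : Fin n, (h : Matrix (Fin (n + 1)) (Fin (n + 1)) F) (Fin.last n) j.castSucc = 0) := by
  simp [ExtSet]

theorem paraEmb_single {n : ℕ} (g : GLn F n) (r : ℂ) :
    paraEmb F n (MonoidAlgebra.single g r) =
      r • ((((Fintype.card F : ℂ) - 1) * (Fintype.card F : ℂ) ^ n)⁻¹ •
      ∑ h ∈ ExtSet F g, MonoidAlgebra.single h (1 : ℂ)) := by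
  simp [paraEmb]

theorem ext_blk_sum {m n : ℕ} (a : GLn F m) (b : GLn F n) :
    ∑ u : Matrix (Fin m) (Fin n) F, ∑ h ∈ ExtSet F (blk a u b), MonoidAlgebra.single h (1 : ℂ) =
    ∑ h' ∈ ExtSet F b, ∑ w : Matrix (Fin m) (Fin (n + 1)) F,
      (MonoidAlgebra.single (blk a w h') (1 : ℂ) : GA F (m + (n + 1))) := by
  rw [Finset.sum_sigma', Finset.sum_sigma']
  symm
  refine Finset.sum_bij (fun p _ => ⟨p.2.submatrix id Fin.castSucc, blk (n := m) (m := n + 1) a p.2 p.1⟩) ?_ ?_ ?_ ?_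
  · rintro ⟨h', w⟩ hp
    simp only [Finset.mem_sigma, Finset.mem_univ, and_true, true_and] at hp ⊢
    rw [mem_ExtSet] at hp ⊢
    obtain ⟨hp1, hp2⟩ := hp
    constructor
    · intro i j
      refine Fin.addCases (fun i => ?_) (fun i => ?_) i <;>
      refine Fin.addCases (fun j => ?_) (fun j => ?_) j
      · rw [blk_apply₁₁]; exact blk_apply₁₁ a w h' i j
      · rw [blk_apply₁₂]; exact blk_apply₁₂ a w h' i j.castSucc
      · rw [blk_apply₂₁]; exact blk_apply₂₁ a w h' i.castSucc j
      · rw [blk_apply₂₂, ← hp1]; exact blk_apply₂₂ a w h' i.castSucc j.castSucc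
    · intro j
      refine Fin.addCases (fun j => ?_) (fun j => ?_) j
      · exact blk_apply₂₁ a w h' (Fin.last n) j
      · rw [← hp2 j]; exact blk_apply₂₂ a w h' (Fin.last n) j.castSucc
  · rintro ⟨h', w⟩ hp ⟨h'', w'⟩ hp' heq
    simp only [Sigma.mk.injEq, heq_eq_eq] at heq
    obtain ⟨-, h1, h2⟩ := blk_injective heq.2
    rw [h1, h2]
  · rintro ⟨u, h⟩ hp
    simp only [Finset.mem_sigma, Finset.mem_univ, true_and] at hp
    rw [mem_ExtSet] at hp
    obtain ⟨hp1, hp2⟩ := hp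
    obtain ⟨a', w, h', hh⟩ := exists_blk (n := m) (m := n + 1) h (by
      intro i j
      refine Fin.lastCases ?_ (fun i => ?_) i
      · exact hp2 (Fin.castAdd n j)
      · refine (hp1 (Fin.natAdd m i) (Fin.castAdd n j)).trans ?_
        rw [blk_apply₂₁])
    have haa : a' = a := by
      apply Units.ext; ext i j
      rw [← blk_apply₁₁ a u b i j, ← hp1, ← blk_apply₁₁ a' w h', hh]; rfl
    subst haa
    refine ⟨⟨h', w⟩, ?_, ?_⟩
    · simp only [Finset.mem_sigma, Finset.mem_univ, and_true]
      rw [mem_ExtSet]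
      constructor
      · intro i j
        rw [← blk_apply₂₂ a' u b i j, ← hp1, ← blk_apply₂₂ a' w h', hh]; rfl
      · intro j
        rw [← hp2 (Fin.natAdd m j), ← blk_apply₂₂ a' w h', hh]; rfl
    · have : w.submatrix id Fin.castSucc = u := by
        ext i j
        rw [← blk_apply₁₂ a' u b i j, ← hp1, hh]
        exact (blk_apply₁₂ a' w h' i j.castSucc).symm
      simp only [this, hh]
  · rintro ⟨h', w⟩ hp
    rfl

theorem paraEmb_circ {m n : ℕ} (y : GA F m) (x : GA F n) :
    paraEmb F (m + n) (circ y x) = (circ y (paraEmb F n x) : GA F (m + (n + 1))) := by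
  induction y using MonoidAlgebra.induction_linear with
  | zero => simp
  | add y z hx hx' => simp only [map_add, LinearMap.add_apply, hx, hx']
  | single a r =>
  induction x using MonoidAlgebra.induction_linear with
  | zero => simp
  | add y y' hx hx' => simp only [map_add, hx, hx']
  | single b s =>
  rw [circ_single, paraEmb_single, map_smul, map_smul, map_smul, map_sum]
  simp only [circ_single, avgblk, mul_one]
  rw [map_smul, map_sum]
  simp only [paraEmb_single, one_smul]
  rw [← Finset.smul_sum, ext_blk_sum]
  rw [← Finset.smul_sum, ← Finset.smul_sum]
  simp only [smul_smul]
  have h0 : (Fintype.card F : ℂ) ≠ 0 := card_ne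
  change _ = (_ • _ : GA F (m + n + 1))
  congr 1
  simp only [mul_inv, mul_add, pow_add, mul_one]
  ring

open scoped Classical in
/-- Sum over the Borel subgroup. -/
noncomputable def BS (m : ℕ) : GA F m :=
  ∑ b ∈ (Finset.univ.filter (fun b : GLn F m => IsUT F b)), MonoidAlgebra.single b (1 : ℂ)

theorem IsUT_mul {m : ℕ} {a b : GLn F m} (ha : IsUT F a) (hb : IsUT F b) : IsUT F (a * b) := by
  have h1 : Matrix.BlockTriangular (a : Matrix (Fin m) (Fin m) F) id := fun i j h => ha i j h
  have h2 : Matrix.BlockTriangular (b : Matrix (Fin m) (Fin m) F) id := fun i j h => hb i j h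
  exact fun i j h => (h1.mul h2) h

theorem IsUT_inv {m : ℕ} {a : GLn F m} (ha : IsUT F a) : IsUT F a⁻¹ := by
  have h1 : Matrix.BlockTriangular (a : Matrix (Fin m) (Fin m) F) id := fun i j h => ha i j h
  have : Invertible (a : Matrix (Fin m) (Fin m) F) := a.isUnit.invertible
  have h2 := Matrix.blockTriangular_inv_of_blockTriangular h1
  intro i j h
  have := h2 h
  rwa [← Matrix.coe_units_inv] at this

theorem IsUT_one {m : ℕ} : IsUT F (1 : GLn F m) := by
  intro i j h
  simp [Matrix.one_apply, h.ne']

theorem single_mul_BS {m : ℕ} {b : GLn F m} (hb : IsUT F b) :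
    MonoidAlgebra.single b 1 * BS m = (BS m : GA F m) := by
  unfold BS
  rw [Finset.mul_sum]
  refine Finset.sum_bij (fun c _ => b * c) ?_ ?_ ?_ ?_
  · intro c hc
    simp only [Finset.mem_filter, Finset.mem_univ, true_and] at hc ⊢
    exact IsUT_mul hb hc
  · intro c _ d _ h
    exact mul_left_cancel h
  · intro c hc
    simp only [Finset.mem_filter, Finset.mem_univ, true_and] at hc
    exact ⟨b⁻¹ * c, by simpa using IsUT_mul (IsUT_inv hb) hc, by simp⟩
  · intro c _
    simp [MonoidAlgebra.single_mul_single]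

theorem BS_mul_BS (m : ℕ) : ∃ N : ℝ, 0 < N ∧ (BS m * BS m : GA F m) = (N : ℂ) • BS m := by
  classical
  refine ⟨(Finset.univ.filter (fun b : GLn F m => IsUT F b)).card, ?_, ?_⟩
  · have : 0 < (Finset.univ.filter (fun b : GLn F m => IsUT F b)).card :=
      Finset.card_pos.2 ⟨1, by simp [IsUT_one]⟩
    exact_mod_cast this
  · conv_lhs => rw [BS.eq_def, Finset.sum_mul]
    rw [Finset.sum_congr rfl (g := fun _ => BS m)]
    · rw [Finset.sum_const, ← Nat.cast_smul_eq_nsmul ℂ]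
      push_cast
      congr!
    · intro b hb
      apply single_mul_BS
      simpa using hb

theorem st_BS (m : ℕ) : st (BS m : GA F m) = BS m := by
  unfold BS
  rw [st_sum]
  simp only [st_single, star_one]
  refine Finset.sum_bij (fun c _ => c⁻¹) ?_ ?_ ?_ ?_
  · intro c hc
    simp only [Finset.mem_filter, Finset.mem_univ, true_and] at hc ⊢
    exact IsUT_inv hc
  · intro c _ d _ h
    exact inv_injective h
  · intro c hc
    simp only [Finset.mem_filter, Finset.mem_univ, true_and] at hc
    exact ⟨c⁻¹, by simpa using IsUT_inv hc, by simp⟩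
  · intro c _
    rfl

theorem BS_zero : (BS 0 : GA F 0) = 1 := by
  classical
  unfold BS
  have : (Finset.univ.filter (fun b : GLn F 0 => IsUT F b)) = {1} := by
    ext b
    have : b = 1 := Subsingleton.elim _ _
    simp only [this, Finset.mem_filter, Finset.mem_univ, true_and, Finset.mem_singleton, IsUT_one]
  rw [Finset.sum_congr (by convert this) (fun _ _ => rfl)]
  simp [MonoidAlgebra.one_def]

theorem paraEmb_BS (m : ℕ) : paraEmb F m (BS m) =
    (((Fintype.card F : ℂ) - 1) * (Fintype.card F : ℂ) ^ m)⁻¹ • (BS (m + 1) : GA F (m + 1)) := by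
  conv_lhs => rw [BS.eq_def, map_sum]
  simp only [paraEmb_single, one_smul]
  rw [← Finset.smul_sum]
  congr 1
  unfold BS
  rw [Finset.sum_sigma']
  refine Finset.sum_bij (fun p _ => p.2) ?_ ?_ ?_ ?_
  · rintro ⟨b, h⟩ hp
    simp only [Finset.mem_sigma, Finset.mem_filter, Finset.mem_univ, true_and] at hp ⊢
    rw [mem_ExtSet] at hp
    obtain ⟨hb, h1, h2⟩ := hp
    intro i j hij
    revert hij
    refine Fin.lastCases ?_ (fun j => ?_) j
    · intro hij; exact absurd hij (not_lt.2 (Fin.le_last i))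
    · refine Fin.lastCases ?_ (fun i => ?_) i
      · intro _; exact h2 j
      · intro hij; rw [h1]; exact hb _ _ (by simpa using hij)
  · rintro ⟨b, h⟩ hp ⟨b', h'⟩ hp' heq
    simp only [Finset.mem_sigma, mem_ExtSet] at hp hp' heq
    subst heq
    have : b = b' := by
      apply Units.ext; ext i j
      rw [← hp.2.1, ← hp'.2.1]
    rw [this]
  · intro h hh
    simp only [Finset.mem_filter, Finset.mem_univ, true_and] at hh
    obtain ⟨a, u, t, rfl⟩ := exists_blk (n := m) (m := 1) h (by
      intro i j
      apply hh
      rw [Fin.lt_def]; simp)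
    refine ⟨⟨a, blk a u t⟩, ?_, rfl⟩
    simp only [Finset.mem_sigma, Finset.mem_filter, Finset.mem_univ, true_and]
    rw [mem_ExtSet]
    refine ⟨?_, fun i j => blk_apply₁₁ a u t i j, fun j => blk_apply₂₁ a u t 0 j⟩
    intro i j hij
    rw [← blk_apply₁₁ a u t i j]
    apply hh
    rw [Fin.lt_def] at hij ⊢
    simpa using hij
  · rintro ⟨b, h⟩ hp
    rfl

theorem avgblk_one_zero {m : ℕ} (a : GLn F m) (b : GLn F 0) :
    (avgblk a b : GA F (m + 0)) = MonoidAlgebra.single a 1 := by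
  unfold avgblk
  have h : ∀ u, (blk a u b : GLn F (m + 0)) = a := by
    intro u
    apply Units.ext; ext i j
    exact blk_apply₁₁ a u b i j
  simp only [h]
  rw [Finset.sum_const]
  have hc : Fintype.card (Matrix (Fin m) (Fin 0) F) = 1 := by
    change Fintype.card (Fin m → Fin 0 → F) = 1
    simp
  rw [Finset.card_univ, hc]; simp

theorem circ_one_zero {m : ℕ} (y : GA F m) : (circ y (1 : GA F 0) : GA F (m + 0)) = y := by
  induction y using MonoidAlgebra.induction_linear with
  | zero => simp
  | add y z hx hx' => simp only [map_add, LinearMap.add_apply, hx, hx']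
  | single a r =>
  rw [MonoidAlgebra.one_def, circ_single, avgblk_one_zero]
  change ((r * 1) • MonoidAlgebra.single a 1 : GA F m) = _
  simp
end Para

section Comm
variable {F}

/-- all functionals in the family are central -/
def Central (f : ∀ k : ℕ, GA F k →ₗ[ℂ] ℂ) : Prop := ∀ k (x y : GA F k), f k (x * y) = f k (y * x)

theorem central_conj {f : ∀ k : ℕ, GA F k →ₗ[ℂ] ℂ} (hf : Central f) {k : ℕ} (s g h : GLn F k)
    (H : h * s = s * g) : f k (MonoidAlgebra.single g 1) = f k (MonoidAlgebra.single h 1) := by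
  have e : h = s * g * s⁻¹ := by rw [← H]; group
  have h1 : (MonoidAlgebra.single h 1 : GA F k) =
      MonoidAlgebra.single (s * g) 1 * MonoidAlgebra.single s⁻¹ 1 := by
    rw [MonoidAlgebra.single_mul_single, e]; simp
  rw [h1, hf, MonoidAlgebra.single_mul_single]
  simp

/-- transpose in GL -/
noncomputable def trGL {n : ℕ} (a : GLn F n) : GLn F n :=
  Matrix.GeneralLinearGroup.mkOfDetNeZero (a : Matrix (Fin n) (Fin n) F).transpose
    (by rw [Matrix.det_transpose]; exact ((Matrix.isUnit_iff_isUnit_det _).mp a.isUnit).ne_zero)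

theorem trGL_coe {n : ℕ} (a : GLn F n) : (trGL a : Matrix (Fin n) (Fin n) F) =
  (a : Matrix (Fin n) (Fin n) F).transpose := rfl

theorem trGL_conj {n : ℕ} (a : GLn F n) : ∃ s : GLn F n, trGL a = s * a * s⁻¹ := by
  obtain ⟨S, hS, h⟩ := exists_transpose_conj (a : Matrix (Fin n) (Fin n) F)
  refine ⟨Matrix.GeneralLinearGroup.mkOfDetNeZero S hS, ?_⟩
  rw [eq_mul_inv_iff_mul_eq]
  apply Units.ext
  exact h

theorem central_reindex {f : ∀ k : ℕ, GA F k →ₗ[ℂ] ℂ} (hf : Central f) {k l : ℕ}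
    (e : Fin k ≃ Fin l) (g : GLn F k) (h : GLn F l)
    (H : (h : Matrix (Fin l) (Fin l) F) = (g : Matrix (Fin k) (Fin k) F).submatrix e.symm e.symm) :
    f k (MonoidAlgebra.single g 1) = f l (MonoidAlgebra.single h 1) := by
  have hkl : k = l := by simpa using Fintype.card_congr e
  subst hkl
  have hd : (e.symm.toPEquiv.toMatrix : Matrix (Fin k) (Fin k) F).det ≠ 0 := by
    rw [Matrix.det_permutation]
    rcases Int.units_eq_one_or (Equiv.Perm.sign e.symm) with h | h <;> rw [h] <;> simp
  apply central_conj hf (Matrix.GeneralLinearGroup.mkOfDetNeZero _ hd)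
  apply Units.ext
  change (h : Matrix (Fin k) (Fin k) F) * e.symm.toPEquiv.toMatrix =
    e.symm.toPEquiv.toMatrix * (g : Matrix (Fin k) (Fin k) F)
  rw [PEquiv.toMatrix_toPEquiv_mul, PEquiv.mul_toMatrix_toPEquiv, H]
  ext i j; simp

theorem central_avgblk_conj {f : ∀ k : ℕ, GA F k →ₗ[ℂ] ℂ} (hf : Central f) {n m : ℕ}
    (a s : GLn F n) (b t : GLn F m) :
    f _ (avgblk (s * a * s⁻¹) (t * b * t⁻¹)) = f _ (avgblk a b) := by
  rw [← avgblk_mul, hf, avgblk_mul]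
  simp

theorem central_blk_tr {f : ∀ k : ℕ, GA F k →ₗ[ℂ] ℂ} (hf : Central f) {n m : ℕ}
    (a : GLn F n) (u : Matrix (Fin n) (Fin m) F) (b : GLn F m) :
    f _ (MonoidAlgebra.single (blk a u b) 1) =
      f _ (MonoidAlgebra.single (blk (trGL b) u.transpose (trGL a)) 1) := by
  obtain ⟨s, hs⟩ := trGL_conj (blk a u b)
  rw [central_conj hf s (blk a u b) (trGL (blk a u b)) (by rw [hs]; group)]
  refine central_reindex hf (finSumFinEquiv.symm.trans ((Equiv.sumComm _ _).trans finSumFinEquiv)) _ _ ?_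
  rw [trGL_coe, blk_coe, blk_coe, trGL_coe, trGL_coe]
  ext i j
  refine Fin.addCases (fun i => ?_) (fun i => ?_) i <;>
  refine Fin.addCases (fun j => ?_) (fun j => ?_) j <;> simp

theorem central_avgblk_comm {f : ∀ k : ℕ, GA F k →ₗ[ℂ] ℂ} (hf : Central f) {n m : ℕ}
    (a : GLn F n) (b : GLn F m) : f _ (avgblk a b) = f _ (avgblk b a) := by
  have h1 : f _ (avgblk a b) = f _ (avgblk (trGL b) (trGL a)) := by
    unfold avgblk
    rw [map_smul, map_smul, map_sum, map_sum, mul_comm m n]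
    congr 1
    simp only [central_blk_tr hf a _ b]
    exact Equiv.sum_comp (Matrix.transposeAddEquiv (Fin n) (Fin m) F).toEquiv
      (fun u => f _ (MonoidAlgebra.single (blk (trGL b) u (trGL a)) 1))
  obtain ⟨s, hs⟩ := trGL_conj a
  obtain ⟨t, ht⟩ := trGL_conj b
  rw [h1, hs, ht, central_avgblk_conj hf]

theorem central_circ_comm {f : ∀ k : ℕ, GA F k →ₗ[ℂ] ℂ} (hf : Central f) {n m : ℕ}
    (x : GA F n) (y : GA F m) : f _ (circ x y) = f _ (circ y x) := by
  induction x using MonoidAlgebra.induction_linear with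
  | zero => simp
  | add x z hx hx' => simp only [map_add, LinearMap.add_apply, hx, hx']
  | single a r =>
  induction y using MonoidAlgebra.induction_linear with
  | zero => simp
  | add y y' hx hx' => simp only [map_add, LinearMap.add_apply, hx, hx']
  | single b s =>
  rw [circ_single, circ_single, map_smul, map_smul, central_avgblk_comm hf, mul_comm]

theorem sylvester {n m : ℕ} (a : Matrix (Fin n) (Fin n) F) (b : Matrix (Fin m) (Fin m) F)
    (hc : IsCoprime a.charpoly b.charpoly) (u : Matrix (Fin n) (Fin m) F) :
    ∃ X : Matrix (Fin n) (Fin m) F, X * b - a * X = u := by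
  let T : Matrix (Fin n) (Fin m) F →ₗ[F] Matrix (Fin n) (Fin m) F :=
    { toFun := fun X => X * b - a * X
      map_add' := by intro X Y; rw [Matrix.add_mul, Matrix.mul_add]; abel
      map_smul' := by intro c X; simp [smul_sub] }
  have hinj : Function.Injective T := by
    rw [injective_iff_map_eq_zero]
    intro X hX
    have hX' : a * X = X * b := by
      have : X * b - a * X = 0 := hX
      exact (sub_eq_zero.1 this).symm
    have hp : ∀ p : Polynomial F, (Polynomial.aeval a p) * X = X * (Polynomial.aeval b p) := by
      intro p
      induction p using Polynomial.induction_on' with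
      | add p q hp hq => simp only [map_add, Matrix.add_mul, Matrix.mul_add, hp, hq]
      | monomial k c =>
        have hk : a ^ k * X = X * b ^ k := by
          induction k with
          | zero => simp
          | succ k ih => rw [pow_succ, Matrix.mul_assoc, hX', ← Matrix.mul_assoc, ih,
              Matrix.mul_assoc, pow_succ]
        rw [Polynomial.aeval_monomial, Polynomial.aeval_monomial, ← Algebra.smul_def,
          ← Algebra.smul_def, Matrix.smul_mul, Matrix.mul_smul, hk]
    obtain ⟨p, q, hpq⟩ := hc
    have h1 : X = X * Polynomial.aeval b (p * a.charpoly + q * b.charpoly) := by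
      rw [hpq]; simp
    rw [map_add, map_mul, map_mul, Matrix.aeval_self_charpoly, mul_zero, add_zero,
      ← map_mul, ← hp, map_mul, Matrix.aeval_self_charpoly, mul_zero, Matrix.zero_mul] at h1
    exact h1
  exact (LinearMap.injective_iff_surjective.1 hinj) u

theorem central_blk_coprime {f : ∀ k : ℕ, GA F k →ₗ[ℂ] ℂ} (hf : Central f) {n m : ℕ}
    (a : GLn F n) (b : GLn F m)
    (hc : IsCoprime (a : Matrix (Fin n) (Fin n) F).charpoly (b : Matrix (Fin m) (Fin m) F).charpoly) :
    f _ (avgblk a b) = f _ (MonoidAlgebra.single (blockDiagGL F a b) 1) := by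
  rw [← blk_zero]
  have h : ∀ u, f _ (MonoidAlgebra.single (blk a u b) 1) = f _ (MonoidAlgebra.single (blk a 0 b) 1) := by
    intro u
    obtain ⟨X, hX⟩ := sylvester _ _ hc u
    symm
    apply central_conj hf (blk 1 X 1)
    rw [blk_mul, blk_mul]
    congr 1
    · simp
    · rw [← hX]; simp
    · simp
  unfold avgblk
  rw [map_smul, map_sum]
  simp only [h]
  rw [Finset.sum_const, Finset.card_univ, show Fintype.card (Matrix (Fin n) (Fin m) F) = Fintype.card F ^ (n * m) from by
      change Fintype.card (Fin n → Fin m → F) = _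
      simp [← pow_mul, mul_comm], ← Nat.cast_smul_eq_nsmul ℂ, smul_smul]
  simp only [Fintype.card_fin, Nat.cast_pow]
  rw [inv_mul_cancel₀ (pow_ne_zero _ card_ne), one_smul]
end Comm

section Pos
variable {F}

/-- compatibility with the parabolic embeddings -/
def Compat (f : ∀ k : ℕ, GA F k →ₗ[ℂ] ℂ) : Prop := ∀ k (x : GA F k), f (k + 1) (paraEmb F k x) = f k x

/-- positivity -/
def Posi (f : ∀ k : ℕ, GA F k →ₗ[ℂ] ℂ) : Prop := ∀ k (x : GA F k), 0 ≤ f k (st x * x)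

theorem circ_BS_right {f : ∀ k : ℕ, GA F k →ₗ[ℂ] ℂ} (hc : Compat f) (m : ℕ) :
    ∃ C : ℝ, 0 < C ∧ ∀ n (x : GA F n), f (n + m) (circ x (BS m)) = C * f n x := by
  induction m with
  | zero =>
    refine ⟨1, one_pos, fun n x => ?_⟩
    rw [BS_zero, circ_one_zero]; simp
  | succ m ih =>
    obtain ⟨C, hC, h⟩ := ih
    have hq : (1 : ℝ) < Fintype.card F := by exact_mod_cast Fintype.one_lt_card
    have hd : 0 < ((Fintype.card F : ℝ) - 1) * (Fintype.card F : ℝ) ^ m :=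
      mul_pos (by linarith) (pow_pos (by linarith) _)
    refine ⟨(((Fintype.card F : ℝ) - 1) * (Fintype.card F : ℝ) ^ m) * C, mul_pos hd hC, ?_⟩
    intro n x
    have e : (BS (m + 1) : GA F (m + 1)) =
        (((Fintype.card F : ℂ) - 1) * (Fintype.card F : ℂ) ^ m) • paraEmb F m (BS m) := by
      rw [paraEmb_BS, smul_smul, mul_inv_cancel₀, one_smul]
      have := hd.ne'
      exact_mod_cast this
    have e2 := hc (n + m) (circ x (BS m))
    rw [paraEmb_circ, h] at e2
    rw [e, map_smul, map_smul, smul_eq_mul]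
    change _ * f (n + m + 1) _ = _
    rw [e2]; push_cast; ring

theorem circ_BS_left {f : ∀ k : ℕ, GA F k →ₗ[ℂ] ℂ} (hf : Central f) (hc : Compat f) (m : ℕ) :
    ∃ C : ℝ, 0 < C ∧ ∀ n (x : GA F n), f (m + n) (circ (BS m) x) = C * f n x := by
  obtain ⟨C, hC, h⟩ := circ_BS_right hc m
  exact ⟨C, hC, fun n x => by rw [central_circ_comm hf, h]⟩

theorem para_ineq {G : Type} [Group G] [Fintype G] (φ : MonoidAlgebra ℂ G →ₗ[ℂ] ℂ)
    (hφ : ∀ x, 0 ≤ φ (st x * x)) (a b : MonoidAlgebra ℂ G) :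
    φ (st (a + b) * (a + b)) ≤ 2 * φ (st a * a) + 2 * φ (st b * b) := by
  have h := hφ (a + (-1 : ℂ) • b)
  have e : φ (st (a + b) * (a + b)) + φ (st (a + (-1 : ℂ) • b) * (a + (-1 : ℂ) • b)) =
     2 * φ (st a * a) + 2 * φ (st b * b) := by
    simp only [st_add, st_smul, add_mul, mul_add, map_add, smul_mul_assoc, mul_smul_comm, map_smul,
      smul_eq_mul, star_neg, star_one]
    ring
  rw [← e]
  exact le_add_of_nonneg_right h

theorem dom_aux {f : ∀ k : ℕ, GA F k →ₗ[ℂ] ℂ} (hf : Central f) (hc : Compat f) (hp : Posi f)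
    {m : ℕ} (w : GA F m) : ∃ C : ℝ, 0 ≤ C ∧ ∀ n (x : GA F n),
      f (m + n) (st (circ (w * BS m) (st x)) * circ (w * BS m) (st x)) ≤ C * f n (st x * x) := by
  induction w using MonoidAlgebra.induction_linear with
  | zero =>
    refine ⟨0, le_rfl, fun n x => ?_⟩
    simp
  | add w w' h h' =>
    obtain ⟨C, hC, h⟩ := h
    obtain ⟨C', hC', h'⟩ := h'
    refine ⟨2 * C + 2 * C', by positivity, fun n x => ?_⟩
    rw [add_mul, map_add, LinearMap.add_apply]
    refine (para_ineq (f (m + n)) (hp _) _ _).trans ?_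
    have e : ((2 * C + 2 * C' : ℝ) : ℂ) * f n (st x * x) =
      2 * (C * f n (st x * x)) + 2 * (C' * f n (st x * x)) := by push_cast; ring
    rw [e]
    have h2 : (0 : ℂ) ≤ 2 := by norm_num
    exact add_le_add (mul_le_mul_of_nonneg_left (h n x) h2) (mul_le_mul_of_nonneg_left (h' n x) h2)
  | single g r =>
    obtain ⟨C, hC, h⟩ := circ_BS_left hf hc m
    obtain ⟨N, hN, hNN⟩ := BS_mul_BS (F := F) m
    refine ⟨‖r‖ ^ 2 * N * C, by positivity, fun n x => ?_⟩
    rw [st_circ, circ_mul, st_mul, st_BS, st_st, st_single]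
    have e : (BS m * MonoidAlgebra.single g⁻¹ (star r) * (MonoidAlgebra.single g r * BS m) : GA F m)
        = ((‖r‖ ^ 2 * N : ℝ) : ℂ) • BS m := by
      rw [mul_assoc, ← mul_assoc (MonoidAlgebra.single g⁻¹ (star r)), MonoidAlgebra.single_mul_single]
      have : (MonoidAlgebra.single (g⁻¹ * g) (star r * r) : GA F m) = ((‖r‖ ^ 2 : ℝ) : ℂ) • 1 := by
        rw [inv_mul_cancel, MonoidAlgebra.one_def, MonoidAlgebra.smul_single]
        congr 1
        rw [smul_eq_mul, mul_one]
        change (starRingEnd ℂ) r * r = _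
        rw [mul_comm, Complex.mul_conj, Complex.normSq_eq_norm_sq]
      rw [this, smul_mul_assoc, one_mul, mul_smul_comm, hNN, smul_smul]
      push_cast; rfl
    rw [e, map_smul, LinearMap.smul_apply, map_smul, h, hf n x (st x), smul_eq_mul]
    apply le_of_eq
    push_cast; ring

theorem yw_eq {m n : ℕ} (w : GA F m) (x : GA F n) : ∃ N : ℝ, 0 < N ∧
    circ (st w * BS m * w) (st x * x) =
      (N : ℂ) • (st (circ (BS m * w) x) * circ (BS m * w) x) := by
  obtain ⟨N, hN, hNN⟩ := BS_mul_BS (F := F) m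
  refine ⟨N⁻¹, inv_pos.2 hN, ?_⟩
  rw [st_circ, circ_mul, st_mul, st_BS]
  have : (st w * BS m * (BS m * w) : GA F m) = (N : ℂ) • (st w * BS m * w) := by
    rw [← mul_assoc, mul_assoc (st w), hNN]
    simp
  rw [this, map_smul, LinearMap.smul_apply, smul_smul]
  have : ((N⁻¹ : ℝ) : ℂ) * N = 1 := by
    have := inv_mul_cancel₀ hN.ne'
    exact_mod_cast this
  rw [this, one_smul]

theorem yw_pos {f : ∀ k : ℕ, GA F k →ₗ[ℂ] ℂ} (hp : Posi f)
    {m n : ℕ} (w : GA F m) (x : GA F n) : 0 ≤ f (m + n) (circ (st w * BS m * w) (st x * x)) := by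
  obtain ⟨N, hN, h⟩ := yw_eq w x
  rw [h, map_smul, smul_eq_mul]
  exact mul_nonneg (by exact_mod_cast hN.le) (hp _ _)

theorem yw_dom {f : ∀ k : ℕ, GA F k →ₗ[ℂ] ℂ} (hf : Central f) (hc : Compat f) (hp : Posi f)
    {m : ℕ} (w : GA F m) : ∃ C : ℝ, 0 < C ∧ ∀ n (x : GA F n),
      f (m + n) (circ (st w * BS m * w) (st x * x)) ≤ C * f n (st x * x) := by
  obtain ⟨C, hC, h⟩ := dom_aux hf hc hp (st w)
  obtain ⟨N, hN, hNN⟩ := BS_mul_BS (F := F) m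
  refine ⟨N⁻¹ * C + 1, by positivity, fun n x => ?_⟩
  have e1 : (N : ℂ) * f (m + n) (circ (st w * BS m * w) (st x * x)) =
      f (m + n) (st (circ (st w * BS m) (st x)) * circ (st w * BS m) (st x)) := by
    rw [← smul_eq_mul, ← map_smul, ← LinearMap.smul_apply, ← map_smul]
    have : (N : ℂ) • (st w * BS m * w) = (st w * BS m * (BS m * w) : GA F m) := by
      rw [← mul_assoc, mul_assoc (st w) (BS m) (BS m), hNN]
      simp
    rw [this, ← circ_mul, hf, circ_mul, st_circ, circ_mul, st_mul, st_BS, st_st, st_st]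
  have hN0 : (N : ℂ) ≠ 0 := by exact_mod_cast hN.ne'
  have e2 : f (m + n) (circ (st w * BS m * w) (st x * x)) =
      ((N⁻¹ : ℝ) : ℂ) * f (m + n) (st (circ (st w * BS m) (st x)) * circ (st w * BS m) (st x)) := by
    rw [← e1]; push_cast; field_simp
  rw [e2]
  have h3 : (0 : ℂ) ≤ ((N⁻¹ : ℝ) : ℂ) := by exact_mod_cast (inv_pos.2 hN).le
  refine (mul_le_mul_of_nonneg_left (h n x) h3).trans ?_
  have : ((N⁻¹ * C + 1 : ℝ) : ℂ) * f n (st x * x) =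
     ((N⁻¹ : ℝ) : ℂ) * (C * f n (st x * x)) + f n (st x * x) := by push_cast; ring
  rw [this]
  exact le_add_of_nonneg_right (hp _ _)

theorem polar {f : ∀ k : ℕ, GA F k →ₗ[ℂ] ℂ} {m n : ℕ} (x : GA F n)
    (h : ∀ w : GA F m, f (m + n) (circ (st w * BS m * w) x) = f m (st w * BS m * w) * f n x)
    (z w : GA F m) : f (m + n) (circ (z * BS m * w) x) = f m (z * BS m * w) * f n x := by
  obtain ⟨a, rfl⟩ : ∃ a, z = st a := ⟨st z, (st_st z).symm⟩
  let L : GA F m →ₗ[ℂ] ℂ := (f (m + n)).comp (circ.flip x) - (f n x) • f m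
  have hL : ∀ y, L y = f (m + n) (circ y x) - f n x * f m y := fun y => rfl
  have h0 : ∀ w, L (st w * BS m * w) = 0 := fun w => by rw [hL, h w]; ring
  have h1 := h0 (a + w)
  have h2 := h0 (a + Complex.I • w)
  have ha := h0 a
  have hw := h0 w
  simp only [st_add, st_smul, add_mul, mul_add, map_add, smul_mul_assoc, mul_smul_comm, map_smul,
      smul_eq_mul, ha, hw] at h1 h2
  have hI : star Complex.I = -Complex.I := Complex.conj_I
  rw [hI] at h2
  have hI2 := Complex.I_mul_I
  have h3 : L (st a * BS m * w) = 0 := by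
    have e1 : L (st w * BS m * a) = - L (st a * BS m * w) := by linear_combination h1
    rw [e1] at h2
    have : 2 * Complex.I * L (st a * BS m * w) = 0 := by linear_combination h2
    simpa using this
  rw [hL] at h3
  linear_combination h3
end Pos

section Ext
variable {F}
variable {A : Type} [NonUnitalRing A] [Module ℂ A] [SMulCommClass ℂ A A] [IsScalarTower ℂ A A]
    [StarRing A] [StarModule ℂ A]

theorem lift_functional
    (ι : ∀ n : ℕ, GA F n →ₗ[ℂ] A)
    (hcomp : ∀ n : ℕ, (ι (n + 1)).comp (paraEmb F n) = ι n)
    (hinj : ∀ n : ℕ, Function.Injective (ι n))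
    (hexhaust : ∀ x : A, ∃ (n : ℕ) (a : GA F n), ι n a = x)
    (g : ∀ k : ℕ, GA F k →ₗ[ℂ] ℂ) (hg : Compat g) :
    ∃ ψ : A →ₗ[ℂ] ℂ, ∀ k x, ψ (ι k x) = g k x := by
  have up : ∀ k l, k ≤ l → ∀ x : GA F k, ∃ y : GA F l, ι l y = ι k x ∧ g l y = g k x := by
    intro k l hkl
    induction l, hkl using Nat.le_induction with
    | base => exact fun x => ⟨x, rfl, rfl⟩
    | succ l hl ih =>
      intro x
      obtain ⟨y, h1, h2⟩ := ih x
      exact ⟨paraEmb F l y, by rw [← h1, ← hcomp l]; rfl, by rw [hg, h2]⟩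
  have wd : ∀ k l (x : GA F k) (y : GA F l), ι k x = ι l y → g k x = g l y := by
    intro k l x y h
    obtain ⟨x', hx1, hx2⟩ := up k (max k l) (le_max_left _ _) x
    obtain ⟨y', hy1, hy2⟩ := up l (max k l) (le_max_right _ _) y
    have : x' = y' := hinj _ (by rw [hx1, hy1, h])
    rw [← hx2, ← hy2, this]
  have two : ∀ z w : A, ∃ k, ∃ x y : GA F k, ι k x = z ∧ ι k y = w := by
    intro z w
    obtain ⟨k, x, rfl⟩ := hexhaust z
    obtain ⟨l, y, rfl⟩ := hexhaust w
    obtain ⟨x', hx1, hx2⟩ := up k (max k l) (le_max_left _ _) x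
    obtain ⟨y', hy1, hy2⟩ := up l (max k l) (le_max_right _ _) y
    exact ⟨_, x', y', hx1, hy1⟩
  choose K X hKX using hexhaust
  have key : ∀ k (x : GA F k), g (K (ι k x)) (X (ι k x)) = g k x := fun k x => wd _ _ _ _ (hKX _)
  refine ⟨{ toFun := fun z => g (K z) (X z), map_add' := ?_, map_smul' := ?_ }, key⟩
  · intro z w
    obtain ⟨k, x, y, rfl, rfl⟩ := two z w
    rw [← map_add, key, key, key, map_add]
  · intro c z
    obtain ⟨k, x, y, rfl, -⟩ := two z z
    rw [← map_smul, key, key, map_smul]; rfl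

theorem star_iota (ι : ∀ n : ℕ, GA F n →ₗ[ℂ] A)
    (hstar : ∀ (n : ℕ) (g : GLn F n),
      star (ι n (MonoidAlgebra.single g 1)) = ι n (MonoidAlgebra.single g⁻¹ 1))
    (n : ℕ) (x : GA F n) : star (ι n x) = ι n (st x) := by
  induction x using MonoidAlgebra.induction_linear with
  | zero => simp [st_zero]
  | add x z hx hx' => simp only [map_add, star_add, st_add, hx, hx']
  | single a r =>
    have e : ∀ (g : GLn F n) (r : ℂ), (MonoidAlgebra.single g r : GA F n) =
      r • MonoidAlgebra.single g 1 := by intro g r; simp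
    rw [st_single, e a r, e a⁻¹, map_smul, map_smul, star_smul, hstar]

theorem ext_mult
    (ι : ∀ n : ℕ, GA F n →ₗ[ℂ] A)
    (hcomp : ∀ n : ℕ, (ι (n + 1)).comp (paraEmb F n) = ι n)
    (hmul : ∀ (n : ℕ) (a b : GA F n), ι n (a * b) = ι n a * ι n b)
    (hinj : ∀ n : ℕ, Function.Injective (ι n))
    (hexhaust : ∀ x : A, ∃ (n : ℕ) (a : GA F n), ι n a = x)
    (hstar : ∀ (n : ℕ) (g : GLn F n),
      star (ι n (MonoidAlgebra.single g 1)) = ι n (MonoidAlgebra.single g⁻¹ 1))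
    (χ : A →ₗ[ℂ] ℂ)
    (hextreme : IsExtremeTrace χ)
    (hnorm : χ (ι 0 1) = 1)
    (f : ∀ k : ℕ, GA F k →ₗ[ℂ] ℂ) (hfdef : ∀ k, f k = χ.comp (ι k))
    (hf : Central f) (hc : Compat f) (hp : Posi f)
    {m n : ℕ} (z w : GA F m) (x : GA F n) :
    f (m + n) (circ (z * BS m * w) x) = f m (z * BS m * w) * f n x := by
  apply polar x
  clear z w
  intro w
  set y := st w * BS m * w with hy
  obtain ⟨C, hC, hdom⟩ := yw_dom hf hc hp w
  have hst := star_iota ι hstar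
  have hfa : ∀ k x, χ (ι k x) = f k x := fun k x => by rw [hfdef]; rfl
  have two : ∀ z w : A, ∃ k, ∃ x y : GA F k, ι k x = z ∧ ι k y = w := by
    have up : ∀ k l, k ≤ l → ∀ x : GA F k, ∃ y : GA F l, ι l y = ι k x := by
      intro k l hkl
      induction l, hkl using Nat.le_induction with
      | base => exact fun x => ⟨x, rfl⟩
      | succ l hl ih =>
        intro x
        obtain ⟨y, h1⟩ := ih x
        exact ⟨paraEmb F l y, by rw [← h1, ← hcomp l]; rfl⟩
    intro z w
    obtain ⟨k, x, rfl⟩ := hexhaust z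
    obtain ⟨l, y, rfl⟩ := hexhaust w
    obtain ⟨x', hx1⟩ := up k (max k l) (le_max_left _ _) x
    obtain ⟨y', hy1⟩ := up l (max k l) (le_max_right _ _) y
    exact ⟨_, x', y', hx1, hy1⟩
  obtain ⟨ψ, hψ⟩ := lift_functional ι hcomp hinj hexhaust
    (fun k => (f (m + k)).comp (circ y)) (by
      intro k x
      change f (m + (k + 1)) (circ y (paraEmb F k x)) = f (m + k) (circ y x)
      rw [← paraEmb_circ]; exact hc _ _)
  have hψ' : ∀ k x, ψ (ι k x) = f (m + k) (circ y x) := hψ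
  have hCi : (0 : ℂ) ≤ ((C⁻¹ : ℝ) : ℂ) := by exact_mod_cast (inv_pos.2 hC).le
  have hcent : ∀ u v : A, ψ (u * v) = ψ (v * u) := by
    intro u v
    obtain ⟨k, a, b, rfl, rfl⟩ := two u v
    rw [← hmul, ← hmul, hψ', hψ']
    have e1 : circ y (a * b) = circ 1 a * circ y b := by rw [circ_mul, one_mul]
    have e2 : circ y (b * a) = circ y b * circ 1 a := by rw [circ_mul, mul_one]
    rw [e1, e2, hf]
  have ht1 : IsTrace (((C⁻¹ : ℝ) : ℂ) • ψ) := by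
    refine ⟨fun u v => ?_, fun u => ?_⟩
    · simp only [LinearMap.smul_apply]; rw [hcent]
    · obtain ⟨k, a, rfl⟩ := hexhaust u
      rw [LinearMap.smul_apply, hst, ← hmul, hψ', smul_eq_mul]
      exact mul_nonneg hCi (yw_pos hp w a)
  have ht2 : IsTrace (χ - ((C⁻¹ : ℝ) : ℂ) • ψ) := by
    refine ⟨fun u v => ?_, fun u => ?_⟩
    · simp only [LinearMap.sub_apply, LinearMap.smul_apply]; rw [hcent, hextreme.1.1]
    · obtain ⟨k, a, rfl⟩ := hexhaust u
      rw [LinearMap.sub_apply, LinearMap.smul_apply, hst, ← hmul, hψ', hfa, smul_eq_mul, sub_nonneg]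
      refine (mul_le_mul_of_nonneg_left (hdom k a) hCi).trans (le_of_eq ?_)
      have hC0 : (C : ℂ) ≠ 0 := by exact_mod_cast hC.ne'
      push_cast
      field_simp
  obtain ⟨c₁, c₂, -, -, h1, -⟩ := hextreme.2.2 _ _ ht1 ht2 (by abel)
  have hC0 : ((C⁻¹ : ℝ) : ℂ) ≠ 0 := by exact_mod_cast (inv_pos.2 hC).ne'
  have ha : ∀ k x, ((C⁻¹ : ℝ) : ℂ) * f (m + k) (circ y x) = c₁ * f k x := by
    intro k x
    have := LinearMap.congr_fun h1 (ι k x)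
    rw [LinearMap.smul_apply, LinearMap.smul_apply, hψ', hfa] at this
    exact this
  have hb := ha 0 1
  rw [circ_one_zero, ← hfa 0 1, hnorm, mul_one] at hb
  have hb' : ((C⁻¹ : ℝ) : ℂ) * f m y = c₁ := hb
  apply mul_left_cancel₀ hC0
  rw [ha, ← mul_assoc, hb']
end Ext

section Bruhat
variable {F}

theorem greedy {N : ℕ} {V : Type} [AddCommGroup V] [Module F V] (c : Fin N → V) (s : Finset (Fin N)) :
    ∃ T : Finset (Fin N), T ⊆ s ∧ LinearIndepOn F c (T : Set (Fin N)) ∧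
      ∀ i ∈ s, i ∉ T → c i ∈ Submodule.span F (c '' ((T.filter (fun j => j < i) : Finset (Fin N)) : Set (Fin N))) := by
  induction s using Finset.induction_on_max with
  | empty => exact ⟨∅, by simp, by simp, by simp⟩
  | insert a s ha ih =>
    obtain ⟨T, hTs, hli, hT⟩ := ih
    have haT : a ∉ T := fun h => lt_irrefl _ (ha a (hTs h))
    by_cases h : c a ∈ Submodule.span F (c '' (T : Set (Fin N)))
    · refine ⟨T, hTs.trans (Finset.subset_insert _ _), hli, ?_⟩
      intro i hi hiT
      rcases Finset.mem_insert.1 hi with rfl | hi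
      · have : T.filter (fun j => j < i) = T := Finset.filter_true_of_mem fun j hj => ha j (hTs hj)
        rwa [this]
      · exact hT i hi hiT
    · refine ⟨insert a T, Finset.insert_subset_insert _ hTs, ?_, ?_⟩
      · rw [Finset.coe_insert, linearIndepOn_insert (by simpa using haT)]
        exact ⟨hli, h⟩
      · intro i hi hiT
        rw [Finset.mem_insert, not_or] at hiT
        rcases Finset.mem_insert.1 hi with rfl | hi
        · exact absurd rfl hiT.1
        · refine Submodule.span_mono (Set.image_mono ?_) (hT i hi hiT.2)
          exact_mod_cast Finset.filter_subset_filter _ (Finset.subset_insert _ _)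

/-- selection matrix -/
def selM (m N : ℕ) (τ : Fin m → Fin N) : Matrix (Fin m) (Fin N) F :=
  Matrix.of fun r i => if i = τ r then 1 else 0

theorem pivots {m N : ℕ} (C : Matrix (Fin m) (Fin N) F) (hs : ∀ y, ∃ z, C.mulVec z = y) :
    ∃ (τ : Fin m → Fin N) (P : Matrix (Fin N) (Fin N) F) (D : Matrix (Fin m) (Fin m) F),
      StrictMono τ ∧ (∀ i j, j < i → P i j = 0) ∧ P.det ≠ 0 ∧ D.det ≠ 0 ∧
        C * P = D * selM m N τ := by
  classical
  obtain ⟨T, -, hli, hT⟩ := greedy (F := F) C.col Finset.univ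
  have hspan : Submodule.span F (C.col '' (T : Set (Fin N))) = ⊤ := by
    rw [eq_top_iff]
    intro y _
    obtain ⟨z, rfl⟩ := hs y
    rw [Matrix.mulVec_eq_sum]
    refine Submodule.sum_mem _ fun i _ => ?_
    have hi : C.col i ∈ Submodule.span F (C.col '' (T : Set (Fin N))) := by
      by_cases hiT : i ∈ T
      · exact Submodule.subset_span ⟨i, by simpa using hiT, rfl⟩
      · refine Submodule.span_mono (Set.image_mono ?_) (hT i (Finset.mem_univ _) hiT)
        exact_mod_cast Finset.filter_subset _ _
    rw [op_smul_eq_smul]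
    exact Submodule.smul_mem _ _ hi
  have hcard : T.card = m := by
    have h1 := finrank_span_eq_card (R := F) hli
    rw [show Set.range (fun x : (T : Set (Fin N)) => C.col x) = C.col '' (T : Set (Fin N)) by
      rw [Set.image_eq_range], hspan] at h1
    simpa using h1.symm
  let τ := T.orderEmbOfFin hcard
  have hτT : ∀ r, τ r ∈ T := fun r => Finset.orderEmbOfFin_mem T hcard r
  have hτs : ∀ i ∈ T, ∃ r, τ r = i := by
    intro i hi
    have : i ∈ Set.range τ := by rw [Finset.range_orderEmbOfFin]; exact hi
    exact this
  have hl : ∀ i, ∃ l : Fin N → F, (i ∈ T → ∀ j, l j = 0) ∧ (∀ j, i ≤ j → l j = 0) ∧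
      ∀ r, ∑ j, l j * C r j = if i ∈ T then 0 else C r i := by
    intro i
    by_cases hi : i ∈ T
    · exact ⟨0, by simp [hi]⟩
    · obtain ⟨l, hl⟩ := (Submodule.mem_span_image_finset_iff_exists_fun' F).1 (hT i (Finset.mem_univ _) hi)
      refine ⟨fun j => if j ∈ T.filter (fun j => j < i) then l j else 0, fun h => absurd h hi, ?_, ?_⟩
      · intro j hj
        simp [not_lt.2 hj]
      · intro r
        have := congrFun hl r
        rw [Finset.sum_apply] at this
        simp only [hi, if_false]
        simp only [ite_mul, zero_mul]
        rw [← Finset.sum_filter]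
        rw [Finset.filter_mem_eq_inter, Finset.univ_inter]
        exact this
  choose l hl1 hl2 hl3 using hl
  let P : Matrix (Fin N) (Fin N) F := Matrix.of fun j i => (if j = i then 1 else 0) - l i j
  have hPu : ∀ i j, j < i → P i j = 0 := by
    intro i j hij
    simp [P, hij.ne', hl2 j i hij.le]
  let D : Matrix (Fin m) (Fin m) F := Matrix.of fun r s => C r (τ s)
  refine ⟨τ, P, D, τ.strictMono, hPu, ?_, ?_, ?_⟩
  · rw [Matrix.det_of_isUpperTriangular (fun i j h => hPu i j h)]
    simp [P, hl2 _ _ le_rfl]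
  · have : IsUnit D := by
      rw [← Matrix.linearIndependent_cols_iff_isUnit]
      exact hli.comp (fun r => ⟨τ r, hτT r⟩) (fun r s h => τ.injective (by simpa using h))
    exact ((Matrix.isUnit_iff_isUnit_det _).1 this).ne_zero
  · refine Matrix.ext fun r i => ?_
    refine (Matrix.mul_apply).trans (Eq.trans ?_ (Matrix.mul_apply).symm)
    have e1 : ∑ j, C r j * P j i = if i ∈ T then C r i else 0 := by
      simp only [P, Matrix.of_apply, mul_sub, Finset.sum_sub_distrib, mul_ite, mul_one, mul_zero,
        Finset.sum_ite_eq', Finset.mem_univ, if_true]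
      simp only [mul_comm (C r _), hl3]
      split_ifs <;> simp
    rw [e1]
    simp only [selM, Matrix.of_apply, D, mul_ite, mul_one, mul_zero]
    split_ifs with hi
    · obtain ⟨s, rfl⟩ := hτs i hi
      rw [Finset.sum_eq_single s]
      · simp
      · intro s' _ hs'
        rw [if_neg]
        exact fun h => hs' (τ.injective h).symm
      · simp
    · rw [Finset.sum_eq_zero]
      intro s _
      rw [if_neg]
      rintro rfl
      exact hi (hτT s)

theorem selM_mul_tr {m N : ℕ} {τ : Fin m → Fin N} (h : Function.Injective τ) :
    (selM m N τ : Matrix _ _ F) * (selM m N τ : Matrix _ _ F).transpose = 1 := by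
  ext r s
  simp [Matrix.mul_apply, selM, Matrix.one_apply, h.eq_iff, eq_comm]

/-- top and bottom rows -/
def topR {n m k : ℕ} (M : Matrix (Fin (n + m)) (Fin k) F) : Matrix (Fin n) (Fin k) F :=
  M.submatrix (Fin.castAdd m) id
def botR {n m k : ℕ} (M : Matrix (Fin (n + m)) (Fin k) F) : Matrix (Fin m) (Fin k) F :=
  M.submatrix (Fin.natAdd n) id

theorem topbot_ext {n m k : ℕ} {M M' : Matrix (Fin (n + m)) (Fin k) F} (h1 : topR M = topR M')
    (h2 : botR M = botR M') : M = M' := by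
  ext i j
  refine Fin.addCases (fun i => ?_) (fun i => ?_) i
  · exact congrFun (congrFun h1 i) j
  · exact congrFun (congrFun h2 i) j

theorem topR_blk {n m k : ℕ} (a : GLn F n) (u : Matrix (Fin n) (Fin m) F) (b : GLn F m)
    (M : Matrix (Fin (n + m)) (Fin k) F) :
    topR ((blk a u b : Matrix (Fin (n + m)) (Fin (n + m)) F) * M) =
      (a : Matrix (Fin n) (Fin n) F) * topR M + u * botR M := by
  ext i j
  simp only [topR, botR, Matrix.submatrix_apply, Matrix.mul_apply, Fin.sum_univ_add, Matrix.add_apply,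
    blk_apply₁₁, blk_apply₁₂, id]

theorem botR_blk {n m k : ℕ} (a : GLn F n) (u : Matrix (Fin n) (Fin m) F) (b : GLn F m)
    (M : Matrix (Fin (n + m)) (Fin k) F) :
    botR ((blk a u b : Matrix (Fin (n + m)) (Fin (n + m)) F) * M) =
      (b : Matrix (Fin m) (Fin m) F) * botR M := by
  ext i j
  simp only [topR, botR, Matrix.submatrix_apply, Matrix.mul_apply, Fin.sum_univ_add, Matrix.add_apply,
    blk_apply₂₁, blk_apply₂₂, id, zero_mul, Finset.sum_const_zero, zero_add]

theorem topR_mul {n m k l : ℕ} (M : Matrix (Fin (n + m)) (Fin k) F) (Q : Matrix (Fin k) (Fin l) F) :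
    topR (M * Q) = topR M * Q := rfl
theorem botR_mul {n m k l : ℕ} (M : Matrix (Fin (n + m)) (Fin k) F) (Q : Matrix (Fin k) (Fin l) F) :
    botR (M * Q) = botR M * Q := rfl

theorem bruhat {n m : ℕ} (g : GLn F (n + m)) : ∃ D : GLn F m, ∀ t : GLn F m, IsUT F t →
    ∃ (X : Matrix (Fin n) (Fin m) F) (b : GLn F (n + m)), IsUT F b ∧
      g * b = blk 1 X (D * t * D⁻¹) * g := by
  obtain ⟨τ, P, D, hτ, hPu, hPd, hDd, hCP⟩ := pivots (botR (g : Matrix (Fin (n + m)) (Fin (n + m)) F)) (by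
    intro y
    refine ⟨((g⁻¹ : GLn F (n + m)) : Matrix (Fin (n + m)) (Fin (n + m)) F).mulVec
      (Fin.append 0 y), ?_⟩
    have : (g : Matrix (Fin (n + m)) (Fin (n + m)) F).mulVec
      (((g⁻¹ : GLn F (n + m)) : Matrix (Fin (n + m)) (Fin (n + m)) F).mulVec
      (Fin.append 0 y)) = Fin.append 0 y := by
      rw [Matrix.mulVec_mulVec, gl_mul_inv, Matrix.one_mulVec]
    ext r
    have := congrFun this (Fin.natAdd n r)
    rw [Fin.append_right] at this
    exact this)
  set D' : GLn F m := Matrix.GeneralLinearGroup.mkOfDetNeZero D hDd with hD'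
  set P' : GLn F (n + m) := Matrix.GeneralLinearGroup.mkOfDetNeZero P hPd with hP'
  have hD'c : (D' : Matrix (Fin m) (Fin m) F) = D := rfl
  have hP'c : (P' : Matrix (Fin (n + m)) (Fin (n + m)) F) = P := rfl
  have hP'u : IsUT F P' := hPu
  refine ⟨D', fun t ht => ?_⟩
  let E : Matrix (Fin m) (Fin (n + m)) F := selM m (n + m) τ
  have hE : E * E.transpose = 1 := selM_mul_tr hτ.injective
  let tm : Matrix (Fin m) (Fin m) F := t
  let H : Matrix (Fin (n + m)) (Fin (n + m)) F := g * P
  let X : Matrix (Fin n) (Fin m) F := topR H * E.transpose * (tm - 1) *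
    ((D'⁻¹ : GLn F m) : Matrix (Fin m) (Fin m) F)
  let Tt : Matrix (Fin (n + m)) (Fin (n + m)) F := 1 + E.transpose * (tm - 1) * E
  have hbot : botR H = D * E := hCP
  have hDi : ((D'⁻¹ : GLn F m) : Matrix (Fin m) (Fin m) F) * D = 1 := gl_inv_mul D'
  have key : (blk 1 X (D' * t * D'⁻¹) : Matrix (Fin (n + m)) (Fin (n + m)) F) * H = H * Tt := by
    apply topbot_ext
    · rw [topR_blk, topR_mul H Tt, hbot, Units.val_one, Matrix.one_mul, Matrix.mul_add, Matrix.mul_one]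
      congr 1
      simp only [X]
      rw [Matrix.mul_assoc _ _ (D * E), ← Matrix.mul_assoc _ D E, hDi, Matrix.one_mul]
      simp only [Matrix.mul_assoc]
    · rw [botR_blk, botR_mul H Tt, hbot, Units.val_mul, Units.val_mul, hD'c, Matrix.mul_add, Matrix.mul_one]
      rw [Matrix.mul_assoc _ _ (D * E), ← Matrix.mul_assoc _ D E, hDi, Matrix.one_mul]
      have : D * E * (E.transpose * (tm - 1) * E) = D * ((E * E.transpose) * (tm - 1) * E) := by
        simp only [Matrix.mul_assoc]
      rw [this, hE, Matrix.one_mul, Matrix.sub_mul, Matrix.mul_sub, Matrix.one_mul,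
        add_sub_cancel, Matrix.mul_assoc]
  have hTu : ∀ i j, j < i → Tt i j = 0 := by
    intro i j hij
    simp only [Tt, Matrix.add_apply, Matrix.one_apply, hij.ne', if_false, zero_add]
    rw [Matrix.mul_apply]
    refine Finset.sum_eq_zero fun s _ => ?_
    rw [Matrix.mul_apply, Finset.sum_mul]
    refine Finset.sum_eq_zero fun r _ => ?_
    simp only [E, selM, Matrix.transpose_apply, Matrix.of_apply]
    split_ifs with h1 h2
    · have : s < r := by rw [← hτ.lt_iff_lt, ← h1, ← h2]; exact hij
      have h3 : tm r s = 0 := ht r s this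
      simp [h3, Matrix.one_apply, this.ne']
    all_goals simp
  refine ⟨X, g⁻¹ * blk 1 X (D' * t * D'⁻¹) * g, ?_, by group⟩
  have hb : ((g⁻¹ * blk 1 X (D' * t * D'⁻¹) * g : GLn F (n + m)) : Matrix (Fin (n + m)) (Fin (n + m)) F)
      = P * Tt * ((P'⁻¹ : GLn F (n + m)) : Matrix (Fin (n + m)) (Fin (n + m)) F) := by
    have h1 : ((g⁻¹ * blk 1 X (D' * t * D'⁻¹) * g : GLn F (n + m)) : Matrix (Fin (n + m)) (Fin (n + m)) F) * P
        = P * Tt := by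
      rw [Units.val_mul, Units.val_mul, Matrix.mul_assoc, Matrix.mul_assoc]
      change _ * (_ * H) = _
      rw [key, ← Matrix.mul_assoc]
      simp only [H]
      rw [← Matrix.mul_assoc, gl_inv_mul, Matrix.one_mul]
    rw [← h1, ← hP'c, Matrix.mul_assoc _ (P' : Matrix (Fin (n + m)) (Fin (n + m)) F), gl_mul_inv, Matrix.mul_one]
  intro i j hij
  rw [hb]
  have b1 : Matrix.BlockTriangular P id := fun i j h => hPu i j h
  have b2 : Matrix.BlockTriangular Tt id := fun i j h => hTu i j h
  have b3 : Matrix.BlockTriangular ((P'⁻¹ : GLn F (n + m)) : Matrix (Fin (n + m)) (Fin (n + m)) F) id :=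
    fun i j h => IsUT_inv hP'u i j h
  exact ((b1.mul b2).mul b3) hij
end Bruhat

section Mackey
variable {F}

theorem charFun_eq {n d : ℕ} (ρ : Representation ℂ (GLn F n) (Fin d → ℂ)) (a : GA F n) :
    charFun F ρ a = LinearMap.trace ℂ (Fin d → ℂ) (ρ.asAlgebraHom a) := by
  induction a using MonoidAlgebra.induction_linear with
  | zero => simp [charFun]
  | add x z hx hx' =>
    rw [map_add, map_add, ← hx, ← hx']
    unfold charFun
    rw [MonoidAlgebra.coeff_add, Finsupp.sum_add_index']
    · intro g; simp
    · intro g r s; ring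
  | single a r => simp [charFun]

theorem mackey_rep {n m d : ℕ} (ρ : Representation ℂ (GLn F (n + m)) (Fin d → ℂ))
    (hρ : IsUnipotentIrrep F ρ) (x : GA F n) (k : GA F m)
    (hk : ∀ h : GLn F m, k * MonoidAlgebra.single h 1 * BS m = 0) :
    ρ.asAlgebraHom (circ x k) = 0 := by
  classical
  obtain ⟨hirr, v, hv0, hv⟩ := hρ
  have key : ∀ g, ρ.asAlgebraHom (circ x k) (ρ g v) = 0 := by
    intro g
    obtain ⟨D, hD⟩ := bruhat g
    have h1 : ∀ t, IsUT F t → ρ.asAlgebraHom (circ x k) (ρ g v) =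
        ρ.asAlgebraHom (circ x (k * MonoidAlgebra.single (D * t * D⁻¹) 1)) (ρ g v) := by
      intro t ht
      obtain ⟨X, b, hb, hgb⟩ := hD t ht
      have e1 : ρ g v = ρ (blk 1 X (D * t * D⁻¹)) (ρ g v) := by
        conv_lhs => rw [← hv b hb]
        rw [← Module.End.mul_apply, ← map_mul, hgb, map_mul, Module.End.mul_apply]
      conv_lhs => rw [e1]
      rw [← Representation.asAlgebraHom_single_one ρ (blk 1 X (D * t * D⁻¹)), ← Module.End.mul_apply,
        ← map_mul, circ_mul_blk, ← MonoidAlgebra.one_def, mul_one]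
    set S := Finset.univ.filter (fun b : GLn F m => IsUT F b) with hS
    have h2 : ∑ t ∈ S, ρ.asAlgebraHom (circ x k) (ρ g v) = 0 := by
      rw [Finset.sum_congr rfl (fun t ht => h1 t (by simpa [S] using ht))]
      rw [← LinearMap.sum_apply, ← map_sum, ← map_sum, ← Finset.mul_sum]
      have e : ∑ t ∈ S, (MonoidAlgebra.single (D * t * D⁻¹) 1 : GA F m) =
          MonoidAlgebra.single D 1 * BS m * MonoidAlgebra.single D⁻¹ 1 := by
        unfold BS
        rw [Finset.mul_sum, Finset.sum_mul]
        simp only [MonoidAlgebra.single_mul_single, mul_one]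
        congr!
      rw [e, ← mul_assoc, ← mul_assoc, hk]
      simp
    rw [Finset.sum_const, ← Nat.cast_smul_eq_nsmul ℂ, smul_eq_zero] at h2
    rcases h2 with h2 | h2
    · exfalso
      have : S.Nonempty := ⟨1, by simp [S, IsUT_one]⟩
      exact this.card_ne_zero (by exact_mod_cast h2)
    · exact h2
  rcases hirr (Submodule.span ℂ (Set.range fun g => ρ g v)) (by
    intro g w hw
    induction hw using Submodule.span_induction with
    | mem w hw =>
      obtain ⟨h, rfl⟩ := hw
      refine Submodule.subset_span ⟨g * h, ?_⟩
      simp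
    | zero => simp
    | add a b _ _ ha hb => rw [map_add]; exact Submodule.add_mem _ ha hb
    | smul c a _ ha => rw [map_smul]; exact Submodule.smul_mem _ _ ha) with h | h
  · exfalso
    apply hv0
    have : v ∈ Submodule.span ℂ (Set.range fun g => ρ g v) := Submodule.subset_span ⟨1, by simp⟩
    rw [h] at this
    simpa using this
  · have : ∀ w : Fin d → ℂ, ρ.asAlgebraHom (circ x k) w = 0 := by
      intro w
      have hw : w ∈ Submodule.span ℂ (Set.range fun g => ρ g v) := by rw [h]; trivial
      induction hw using Submodule.span_induction with
      | mem w hw => obtain ⟨h, rfl⟩ := hw; exact key h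
      | zero => simp
      | add a b _ _ ha hb => rw [map_add, ha, hb, add_zero]
      | smul c a _ ha => rw [map_smul, ha, smul_zero]
    exact LinearMap.ext this

theorem mackey_functional {n m : ℕ} (φ : GA F (n + m) → ℂ) (hφ : IsUnipotentFunctional F φ)
    (x : GA F n) (k : GA F m)
    (hk : ∀ h : GLn F m, k * MonoidAlgebra.single h 1 * BS m = 0) : φ (circ x k) = 0 := by
  obtain ⟨K, c, d, ρ, hρ, h⟩ := hφ
  rw [h]
  refine Finset.sum_eq_zero fun i _ => ?_
  rw [charFun_eq, mackey_rep (ρ i) (hρ i) x k hk]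
  simp

theorem decomp {m : ℕ} (y : GA F m) : ∃ j k : GA F m, y = j + k ∧
    j ∈ Submodule.span ℂ (Set.range fun p : GA F m × GA F m => p.1 * BS m * p.2) ∧
    ∀ h : GLn F m, k * MonoidAlgebra.single h 1 * BS m = 0 := by
  classical
  let e : GA F m ≃ₗ[ℂ] EuclideanSpace ℂ (GLn F m) :=
    ((MonoidAlgebra.coeffLinearEquiv ℂ).trans (Finsupp.linearEquivFunOnFinite ℂ ℂ (GLn F m))).trans
      (WithLp.linearEquiv 2 ℂ (GLn F m → ℂ)).symm
  have hes : ∀ (a : GLn F m) (k : GA F m), inner ℂ (e (MonoidAlgebra.single a 1)) (e k) = k.coeff a := by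
    intro a k
    have : e (MonoidAlgebra.single a 1) = EuclideanSpace.single a (1 : ℂ) := by
      ext b
      simp [e, Finsupp.single_apply, Pi.single_apply, eq_comm]
    rw [this, EuclideanSpace.inner_single_left]
    simp [e]
  let J := Submodule.span ℂ (Set.range fun p : GA F m × GA F m => p.1 * BS m * p.2)
  obtain ⟨j', hj', k', hk', h⟩ := Submodule.exists_add_mem_mem_orthogonal (K := J.map e.toLinearMap) (e y)
  obtain ⟨j, hj, rfl⟩ := hj'
  obtain ⟨k, rfl⟩ := e.surjective k'
  refine ⟨j, k, ?_, hj, ?_⟩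
  · apply e.injective; rw [h, map_add]; rfl
  · intro h
    rw [Submodule.mem_orthogonal] at hk'
    ext g
    have h1 := hk' (e (MonoidAlgebra.single g 1 * BS m * MonoidAlgebra.single h⁻¹ 1))
      ⟨_, Submodule.subset_span ⟨(MonoidAlgebra.single g 1, MonoidAlgebra.single h⁻¹ 1), rfl⟩, rfl⟩
    have cm : ∀ (z : GA F m) (a b : GLn F m), (z * MonoidAlgebra.single a 1).coeff b =
        z.coeff (b * a⁻¹) := by
      intro z a b
      rw [MonoidAlgebra.coeff_mul_single_eq_coeff_mul (b * a⁻¹)]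
      · simp
      · intro c _; exact eq_mul_inv_iff_mul_eq.symm
    rw [← st_BS]
    unfold BS at h1 ⊢
    rw [Finset.mul_sum, Finset.sum_mul, map_sum, sum_inner] at h1
    simp only [MonoidAlgebra.single_mul_single, mul_one, hes] at h1
    rw [st_sum, Finset.mul_sum, MonoidAlgebra.coeff_sum, Finset.sum_apply']
    simp only [st_single, star_one, cm, inv_inv, h1]
    simp
end Mackey

/-- **Multiplicativity theorem for unipotent traces** (Theorem 3.3).
Here `A`, together with the compatible system `ι` of injective multiplicative linear maps
from the group algebras `ℂ[GL(n,q)]` (along the parabolic embeddings) whose images exhaust `A`,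
realizes the Schwartz–Bruhat algebra `A(GLB)` with its canonical involution; `χ` is an
extreme unipotent trace normalized by `χ(I_B) = 1`. If `a ∈ GL(n,q)` and `b ∈ GL(m,q)` have
coprime characteristic polynomials then `χ([e_{a⊙b}]) = χ([e_a])·χ([e_b])`. -/
theorem multiplicativity_of_unipotent_traces
    (A : Type) [NonUnitalRing A] [Module ℂ A] [SMulCommClass ℂ A A] [IsScalarTower ℂ A A]
    [StarRing A] [StarModule ℂ A]
    (ι : ∀ n : ℕ, GA F n →ₗ[ℂ] A)
    (hcomp : ∀ n : ℕ, (ι (n + 1)).comp (paraEmb F n) = ι n)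
    (hmul : ∀ (n : ℕ) (a b : GA F n), ι n (a * b) = ι n a * ι n b)
    (hinj : ∀ n : ℕ, Function.Injective (ι n))
    (hexhaust : ∀ x : A, ∃ (n : ℕ) (a : GA F n), ι n a = x)
    (hstar : ∀ (n : ℕ) (g : GLn F n),
      star (ι n (MonoidAlgebra.single g 1)) = ι n (MonoidAlgebra.single g⁻¹ 1))
    (χ : A →ₗ[ℂ] ℂ)
    (hextreme : IsExtremeTrace χ)
    (hunip : ∀ n : ℕ, IsUnipotentFunctional F (fun a => χ (ι n a)))
    (hnorm : χ (ι 0 1) = 1)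
    {n m : ℕ} (hn : 1 ≤ n) (hm : 1 ≤ m) (a : GLn F n) (b : GLn F m)
    (hcoprime : IsCoprime (Matrix.charpoly (a : Matrix (Fin n) (Fin n) F))
      (Matrix.charpoly (b : Matrix (Fin m) (Fin m) F))) :
    χ (ι (n + m) (MonoidAlgebra.single (blockDiagGL F a b) 1))
      = χ (ι n (MonoidAlgebra.single a 1)) * χ (ι m (MonoidAlgebra.single b 1)) := by
  let f : ∀ k : ℕ, GA F k →ₗ[ℂ] ℂ := fun k => χ.comp (ι k)
  have hfa : ∀ k x, χ (ι k x) = f k x := fun k x => rfl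
  have hf : Central f := by
    intro k x y
    rw [← hfa, ← hfa, hmul, hmul, hextreme.1.1]
  have hc : Compat f := by
    intro k x
    rw [← hfa, ← hfa, ← hcomp k]
    rfl
  have hp : Posi f := by
    intro k x
    rw [← hfa, hmul, ← star_iota ι hstar]
    exact hextreme.1.2 _
  have hJ : ∀ (x : GA F n) (z w : GA F m),
      f (m + n) (circ (z * BS m * w) x) = f m (z * BS m * w) * f n x := fun x z w =>
    ext_mult ι hcomp hmul hinj hexhaust hstar χ hextreme hnorm f (fun _ => rfl) hf hc hp z w x
  rw [hfa, hfa, hfa, ← central_blk_coprime hf a b hcoprime, central_avgblk_comm hf]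
  set x : GA F n := MonoidAlgebra.single a 1 with hx
  have e0 : (avgblk b a : GA F (m + n)) = circ (MonoidAlgebra.single b 1) x := by
    rw [hx, circ_single, mul_one, one_smul]
  rw [e0]
  obtain ⟨j, k, hjk, hj, hk⟩ := decomp (MonoidAlgebra.single b 1 : GA F m)
  have hj' : f (m + n) (circ j x) = f m j * f n x := by
    clear hjk
    induction hj using Submodule.span_induction with
    | mem w hw => obtain ⟨p, rfl⟩ := hw; exact hJ x p.1 p.2
    | zero => simp
    | add a b _ _ ha hb => rw [map_add, map_add, LinearMap.add_apply, map_add, ha, hb, add_mul]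
    | smul c a _ ha =>
      rw [map_smul, map_smul, LinearMap.smul_apply, map_smul, ha, smul_eq_mul, smul_eq_mul, mul_assoc]
  have hk1 : f (m + n) (circ k x) = 0 := by
    rw [central_circ_comm hf]
    exact mackey_functional _ (hunip (n + m)) x k hk
  have hk2 : f m k = 0 := by
    have h1 : f (0 + m) (circ (1 : GA F 0) k) = 0 := mackey_functional _ (hunip (0 + m)) 1 k hk
    rw [central_circ_comm hf, circ_one_zero] at h1
    exact h1
  rw [hjk, map_add, LinearMap.add_apply, map_add, map_add, hj', hk1, hk2]
  ring
end

section
/- Let n ≥ 1, let U ⊆ GL(n,q) be the subgroup of unipotent upper-triangular matrices u with u_{ii} = 1 for all i and u_{ij} = 0 whenever i < j ≤ n−1 (so the only possibly nonzero off-diagonal entries of u lie in the last column), and embed GL(n−1,q) × GL(1,q) into GL(n,q) as block-diagonal matrices; this subgroup normalizes U. Then for every irreducible complex representation (π,V) of GL(n,q), the representation of GL(n−1,q) × GL(1,q) on the subspace V^U of U-invariant vectors is multiplicity free: every irreducible complex representation of GL(n−1,q) × GL(1,q) occurs in V^U with multiplicity at most 1. (Multiplicity-freeness of parabolic branching, the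 content of Theorem 2.10 and Theorem 2.12, Remark 2.) -/
/-!
STATEMENT 9: multiplicity-freeness of parabolic branching (the content of Theorem 2.10 and
Theorem 2.12, Remark 2).
-/

variable (F : Type) [Field F] [Fintype F] [DecidableEq F]

/-- The subgroup `U ⊆ GL(n+1,q)` of unipotent upper-triangular matrices whose only possibly
nonzero off-diagonal entries lie in the last column. -/
def IsUcol {n : ℕ} (u : GLn F (n + 1)) : Prop :=
  (∀ i : Fin (n + 1), (u : Matrix (Fin (n + 1)) (Fin (n + 1)) F) i i = 1) ∧
  (∀ i j : Fin (n + 1), i ≠ j → j ≠ Fin.last n →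
    (u : Matrix (Fin (n + 1)) (Fin (n + 1)) F) i j = 0)

/-- The subspace `V^U` of `U`-invariant vectors of a representation `π` of `GL(n+1,q)`. -/
def invariantsUcol {n : ℕ} {V : Type} [AddCommGroup V] [Module ℂ V]
    (π : Representation ℂ (GLn F (n + 1)) V) : Submodule ℂ V where
  carrier := {v | ∀ u : GLn F (n + 1), IsUcol F u → π u v = v}
  add_mem' := by
    intro a b ha hb u hu
    rw [map_add, ha u hu, hb u hu]
  zero_mem' := by
    intro u hu
    rw [map_zero]
  smul_mem' := by
    intro c v hv u hu
    rw [map_smul, hv u hu]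

/-- The space of `GL(n,q) × GL(1,q)`-equivariant linear maps from `(σ, W)` to the subspace
`V^U` of `U`-invariant vectors of `(π, V)` (the intertwining space whose dimension is the
multiplicity of `σ` in `V^U`). -/
def homSpace {n : ℕ} {V W : Type} [AddCommGroup V] [Module ℂ V] [AddCommGroup W] [Module ℂ W]
    (π : Representation ℂ (GLn F (n + 1)) V)
    (σ : Representation ℂ (GLn F n × GLn F 1) W) : Submodule ℂ (W →ₗ[ℂ] V) where
  carrier := {f | (∀ w : W, f w ∈ invariantsUcol F π) ∧
    ∀ (h : GLn F n × GLn F 1) (w : W),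
      f (σ h w) = π ((blockDiagGL F h.1 h.2 : GLn F (n + 1))) (f w)}
  add_mem' := by
    rintro f g ⟨hf1, hf2⟩ ⟨hg1, hg2⟩
    refine ⟨fun w => Submodule.add_mem _ (hf1 w) (hg1 w), fun h w => ?_⟩
    simp [LinearMap.add_apply, hf2 h w, hg2 h w]
  zero_mem' := by
    exact ⟨fun w => Submodule.zero_mem _, fun h w => by simp⟩
  smul_mem' := by
    rintro c f ⟨hf1, hf2⟩
    refine ⟨fun w => Submodule.smul_mem _ _ (hf1 w), fun h w => ?_⟩
    simp [LinearMap.smul_apply, hf2 h w]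

open Module in
lemma irr_of_hyp {G V : Type} [Group G] [AddCommGroup V] [Module ℂ V] [Nontrivial V]
    (π : Representation ℂ G V)
    (hπ : ∀ S : Submodule ℂ V, (∀ g : G, ∀ v ∈ S, π g v ∈ S) → S = ⊥ ∨ S = ⊤) :
    π.IsIrreducible := by
  have : Nontrivial (Subrepresentation π) := by
    refine ⟨⊥, ⊤, fun h => ?_⟩
    have h2 : (⊥ : Submodule ℂ V) = ⊤ := congrArg Subrepresentation.toSubmodule h
    exact bot_ne_top h2
  refine ⟨fun S => ?_⟩
  rcases hπ S.toSubmodule (fun g v hv => S.apply_mem_toSubmodule g hv) with h | h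
  · left; exact Subrepresentation.toSubmodule_injective h
  · right; exact Subrepresentation.toSubmodule_injective h

lemma irr_sub {G V : Type} [Group G] [AddCommGroup V] [Module ℂ V]
    (π : Representation ℂ G V) [π.IsIrreducible] (S : Submodule ℂ V)
    (hS : ∀ g : G, ∀ v ∈ S, π g v ∈ S) : S = ⊥ ∨ S = ⊤ := by
  let S' : Subrepresentation π := ⟨S, fun g v hv => hS g v hv⟩
  rcases eq_bot_or_eq_top S' with h | h
  · left; exact congrArg Subrepresentation.toSubmodule h
  · right; exact congrArg Subrepresentation.toSubmodule h

lemma burnside_irr {G V : Type} [Group G] [AddCommGroup V] [Module ℂ V] [FiniteDimensional ℂ V]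
    (π : Representation ℂ G V) [π.IsIrreducible] (X : V →ₗ[ℂ] V) :
    ∃ r : MonoidAlgebra ℂ G, X = π.asAlgebraHom r := by
  have hb := IsSimpleModule.algebraMap_end_bijective_of_isAlgClosed (k := ℂ) (A := MonoidAlgebra ℂ G) (V := π.asModule)
  let Y : Module.End (Module.End (MonoidAlgebra ℂ G) π.asModule) π.asModule :=
    { toFun := fun m => π.asModuleEquiv.symm (X (π.asModuleEquiv m))
      map_add' := by intro x y; simp
      map_smul' := by
        intro c x
        obtain ⟨z, rfl⟩ := hb.2 c
        simp }
  classical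
  let b := Module.finBasis ℂ V
  obtain ⟨r, hr⟩ := jacobson_density Y (Finset.univ.image (fun i => π.asModuleEquiv.symm (b i)))
  refine ⟨r, b.ext fun i => ?_⟩
  have := hr (π.asModuleEquiv.symm (b i)) (Finset.mem_image_of_mem _ (Finset.mem_univ _))
  have h2 := congrArg π.asModuleEquiv this
  simpa [Y] using h2

lemma trace_det {G V : Type} [Group G] [AddCommGroup V] [Module ℂ V] [FiniteDimensional ℂ V]
    (π : Representation ℂ G V) [π.IsIrreducible] (X Y : V →ₗ[ℂ] V)
    (h : ∀ g, LinearMap.trace ℂ V (π g ∘ₗ X) = LinearMap.trace ℂ V (π g ∘ₗ Y)) : X = Y := by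
  have h1 : ∀ r : MonoidAlgebra ℂ G, LinearMap.trace ℂ V (π.asAlgebraHom r ∘ₗ X) = 
      LinearMap.trace ℂ V (π.asAlgebraHom r ∘ₗ Y) := by
    intro r
    induction r using MonoidAlgebra.induction_on with
    | of g => simpa using h g
    | add a b ha hb => simp [LinearMap.add_comp, ha, hb]
    | smul c a ha => simp [LinearMap.smul_comp, ha]
  ext v
  rw [← sub_eq_zero, ← Module.forall_dual_apply_eq_zero_iff ℂ]
  intro ξ
  obtain ⟨r, hr⟩ := burnside_irr π (ξ.smulRight v)
  have := h1 r
  rw [← hr, LinearMap.trace_comp_comm', LinearMap.trace_comp_comm' Y] at this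
  have e : ∀ Z : V →ₗ[ℂ] V, Z ∘ₗ (ξ.smulRight v) = ξ.smulRight (Z v) := by
    intro Z; ext; simp
  rw [e, e] at this
  simp at this
  simp [this]

/-- Existence of an invariant form. -/
lemma exists_form {G V : Type} [Group G] [Finite G] [AddCommGroup V] [Module ℂ V] [FiniteDimensional ℂ V]
    (π : Representation ℂ G V) [π.IsIrreducible] (τ : G → G) (hτ : ∀ a b, τ (a * b) = τ b * τ a)
    (hc : ∀ g, IsConj g (τ g)) :
    ∃ B : V ≃ₗ[ℂ] Module.Dual ℂ V, ∀ g v w, B (π g v) w = B v (π (τ g) w) := by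
  have := Fintype.ofFinite G
  have : Invertible (Nat.card G : ℂ) := invertibleOfNonzero (by simp)
  have h1 : τ 1 = 1 := by
    have := hτ 1 1
    simpa using this
  let ρ : Representation ℂ G (Module.Dual ℂ V) :=
    { toFun := fun g => (π (τ g)).dualMap
      map_one' := by ext; simp [h1]
      map_mul' := by intro a b; ext; simp [hτ] }
  have hch : ρ.character = π.character := by
    ext g
    have : ρ.character g = π.character (τ g) := LinearMap.trace_transpose' (π (τ g))
    rw [this]
    obtain ⟨c, hc⟩ := isConj_iff.1 (hc g)
    rw [← hc, Representation.char_conj]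
  have e1 := Representation.card_inv_mul_sum_char_mul_char_eq_finrank π ρ
  have e2 := Representation.card_inv_mul_sum_char_mul_char_eq_finrank π π
  rw [hch, e2, Representation.IsIrreducible.finrank_intertwiningMap_self] at e1
  have e3 : Module.finrank ℂ (π.IntertwiningMap ρ) = 1 := by exact_mod_cast e1.symm
  obtain ⟨f, hf, -⟩ := finrank_eq_one_iff'.1 e3
  have hinj := (Representation.IsIrreducible.injective_or_eq_zero f).resolve_right hf
  refine ⟨LinearMap.linearEquivOfInjective f.toLinearMap hinj ?_, ?_⟩
  · simp
  · intro g v w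
    have := congrArg (fun z : Module.Dual ℂ V => z w) (Representation.IntertwiningMap.isIntertwining _ _ f g v)
    simpa [ρ] using this

lemma gelfand_core {G L V W : Type} [Group G] [Finite G] [Group L] [Finite L]
    [AddCommGroup V] [Module ℂ V] [FiniteDimensional ℂ V]
    [AddCommGroup W] [Module ℂ W] [FiniteDimensional ℂ W]
    (π : Representation ℂ G V) [π.IsIrreducible] (σ : Representation ℂ L W) [σ.IsIrreducible]
    (τ : G → G) (hτ : ∀ a b, τ (a * b) = τ b * τ a) (hττ : ∀ a, τ (τ a) = a)
    (hc : ∀ g, IsConj g (τ g))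
    (t : L → L) (ht : ∀ a b, t (a * b) = t b * t a) (htt : ∀ a, t (t a) = a)
    (htc : ∀ g, IsConj g (t g))
    (ι : L → G) (hι : ∀ l, τ (ι l) = ι (t l)) (U : G → Prop)
    (orb : ∀ g, ∃ l u u', U u ∧ U (τ u') ∧ τ g * ι l = ι l * u' * g * u)
    (f₁ f₂ : W →ₗ[ℂ] V)
    (h₁ : ∀ u, U u → ∀ w, π u (f₁ w) = f₁ w) (h₁' : ∀ l w, f₁ (σ l w) = π (ι l) (f₁ w))
    (h₂ : ∀ u, U u → ∀ w, π u (f₂ w) = f₂ w) (h₂' : ∀ l w, f₂ (σ l w) = π (ι l) (f₂ w))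
    (hne : f₁ ≠ 0) : ∃ c : ℂ, c • f₁ = f₂ := by
  obtain ⟨B, hB⟩ := exists_form π τ hτ hc
  obtain ⟨C, hC⟩ := exists_form σ t ht htc
  have hB' : ∀ g v w, B v (π g w) = B (π (τ g) v) w := by
    intro g v w; rw [hB, hττ]
  have hC' : ∀ g v w, C v (σ g w) = C (σ (t g) v) w := by
    intro g v w; rw [hC, htt]
  -- f₁ injective
  have hinj : Function.Injective f₁ := by
    rw [← LinearMap.ker_eq_bot]
    refine (irr_sub σ (LinearMap.ker f₁) ?_).resolve_right ?_
    · intro l w hw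
      rw [LinearMap.mem_ker] at hw ⊢
      rw [h₁', hw, map_zero]
    · intro h
      exact hne (LinearMap.ker_eq_top.1 h)
  -- adjoints
  obtain ⟨p, hp, hps⟩ : ∃ p : V →ₗ[ℂ] W, (∀ v w, C (p v) w = B v (f₁ w)) ∧
      Function.Surjective p := by
    refine ⟨C.symm.toLinearMap ∘ₗ f₁.dualMap ∘ₗ B.toLinearMap, fun v w => by simp, ?_⟩
    have := LinearMap.dualMap_surjective_of_injective hinj
    exact C.symm.surjective.comp (this.comp B.surjective)
  have hCr : ∀ x y, (∀ w, C w x = C w y) → x = y := fun x y h => by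
    rw [← sub_eq_zero, ← Module.forall_dual_apply_eq_zero_iff ℂ]
    intro ξ
    obtain ⟨w, rfl⟩ := C.surjective ξ
    simp [h]
  obtain ⟨q, hq⟩ : ∃ q : V →ₗ[ℂ] W, ∀ w v, C w (q v) = B (f₂ w) v := by
    let D : W →ₗ[ℂ] Module.Dual ℂ W := C.toLinearMap.flip
    have hD : Function.Injective D := fun x y h => hCr x y fun w => by
      simpa [D] using congrArg (fun z : Module.Dual ℂ W => z w) h
    let E := LinearMap.linearEquivOfInjective D hD (by simp)
    have hE : ∀ x w, E x w = C w x := fun x w => by simp [E, D]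
    refine ⟨E.symm.toLinearMap ∘ₗ f₂.dualMap ∘ₗ B.toLinearMap.flip, fun w v => ?_⟩
    rw [← hE]
    simp
  have hCl : ∀ x y, (∀ w, C x w = C y w) → x = y := fun x y h => 
    C.injective (LinearMap.ext h)
  have hBl : ∀ x y, (∀ w, B x w = B y w) → x = y := fun x y h => 
    B.injective (LinearMap.ext h)
  -- key operators
  have inv : ∀ (f : W →ₗ[ℂ] V) (p : V →ₗ[ℂ] W), (∀ u, U u → ∀ w, π u (f w) = f w) →
      (∀ l w, f (σ l w) = π (ι l) (f w)) → (∀ u, U (τ u) → ∀ v, p (π u v) = p v) →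
      (∀ l v, p (π (ι l) v) = σ l (p v)) → 
      ∀ g, LinearMap.trace ℂ V (π (τ g) ∘ₗ (f ∘ₗ p)) = LinearMap.trace ℂ V (π g ∘ₗ (f ∘ₗ p)) := by
    intro f p h h' k k' g
    obtain ⟨l, u, u', hu, hu', e⟩ := orb g
    have e2 : τ g = ι l * (u' * g * u) * (ι l)⁻¹ := by
      rw [← mul_assoc, ← mul_assoc, ← e]; group
    have c1 : π (ι l)⁻¹ ∘ₗ (f ∘ₗ p) ∘ₗ π (ι l) = f ∘ₗ p := by
      ext v
      simp [k', h']
    have c2 : π u ∘ₗ (f ∘ₗ p) ∘ₗ π u' = f ∘ₗ p := by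
      ext v
      simp [k u' hu', h u hu]
    calc _ = LinearMap.trace ℂ V (π (ι l) ∘ₗ (π (u' * g * u) ∘ₗ π (ι l)⁻¹ ∘ₗ (f ∘ₗ p))) := by
            rw [e2]; congr 1; ext v; simp
      _ = LinearMap.trace ℂ V (π (u' * g * u) ∘ₗ (π (ι l)⁻¹ ∘ₗ (f ∘ₗ p) ∘ₗ π (ι l))) := by
            rw [LinearMap.trace_comp_comm']; rfl
      _ = LinearMap.trace ℂ V (π (u' * g * u) ∘ₗ (f ∘ₗ p)) := by rw [c1]
      _ = LinearMap.trace ℂ V (π u' ∘ₗ (π g ∘ₗ π u ∘ₗ (f ∘ₗ p))) := by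
            congr 1; ext v; simp
      _ = LinearMap.trace ℂ V (π g ∘ₗ (π u ∘ₗ (f ∘ₗ p) ∘ₗ π u')) := by
            rw [LinearMap.trace_comp_comm']; rfl
      _ = _ := by rw [c2]
  have adj : ∀ v w, B (f₂ (p v)) w = B v (f₁ (q w)) := by
    intro v w
    rw [← hq, hp]
  have key : f₂ ∘ₗ p = f₁ ∘ₗ q := by
    apply trace_det π
    intro g
    rw [← inv f₁ q h₁ h₁' ?_ ?_ g]
    · have : (π g ∘ₗ f₂ ∘ₗ p) = B.symm.toLinearMap ∘ₗ ((f₁ ∘ₗ q) ∘ₗ π (τ g)).dualMap ∘ₗ B.toLinearMap := by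
        ext v
        apply B.injective
        ext w
        simp [hB, adj]
      rw [this, LinearMap.trace_comp_comm', LinearMap.comp_assoc]
      simp only [LinearEquiv.comp_symm, LinearMap.comp_id]
      rw [LinearMap.trace_comp_comm' (f₁ ∘ₗ q)]
      exact LinearMap.trace_transpose' _
    · intro u hu v
      apply hCr
      intro w
      rw [hq, hq, hB', h₂ _ hu]
    · intro l v
      apply hCr
      intro w
      rw [hq, hB', hι, ← h₂', ← hq, hC']
  obtain ⟨k, hk⟩ := f₁.exists_leftInverse_of_injective (LinearMap.ker_eq_bot.2 hinj)
  have hk' : ∀ w, k (f₁ w) = w := fun w => congrArg (fun z : W →ₗ[ℂ] W => z w) hk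
  have hT : ∀ w, f₁ (k (f₂ w)) = f₂ w := by
    intro w
    obtain ⟨v, rfl⟩ := hps w
    have : f₂ (p v) = f₁ (q v) := congrArg (fun z : V →ₗ[ℂ] V => z v) key
    rw [this, hk']
  let T : Module.End ℂ W := k ∘ₗ f₂
  have hTσ : ∀ l w, T (σ l w) = σ l (T w) := by
    intro l w
    apply hinj
    simp only [T, LinearMap.comp_apply]
    rw [hT, h₁', hT, h₂']
  have : Nontrivial W := by
    by_contra h
    rw [not_nontrivial_iff_subsingleton] at h
    exact hne (LinearMap.ext fun w => by rw [Subsingleton.elim w 0]; simp)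
  obtain ⟨c, hc⟩ := Module.End.exists_eigenvalue T
  refine ⟨c, LinearMap.ext fun w => ?_⟩
  have htop := (irr_sub σ (Module.End.eigenspace T c) (fun l w hw => by
    rw [Module.End.mem_eigenspace_iff] at hw ⊢
    rw [hTσ, hw, map_smul])).resolve_left hc
  have hw : w ∈ Module.End.eigenspace T c := by rw [htop]; trivial
  rw [Module.End.mem_eigenspace_iff] at hw
  rw [← hT w, LinearMap.smul_apply, ← map_smul, ← hw]
  rfl

open Polynomial in
lemma exists_frob_functional_s9 {K : Type} [Field K] (P : K[X]) (hP : P ≠ 0) :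
    ∃ lam : (K[X] ⧸ Ideal.span {P}) →ₗ[K] K, ∀ x, x ≠ 0 → ∃ y, lam (y * x) ≠ 0 := by
  classical
  let Q := P * C P.leadingCoeff⁻¹
  have hQ : Q.Monic := monic_mul_leadingCoeff_inv hP
  have hPQ : Ideal.span {P} = Ideal.span {Q} := by
    rw [Ideal.span_singleton_eq_span_singleton]
    refine associated_mul_unit_right P _ ?_
    rw [isUnit_C]
    simpa using hP
  rw [hPQ]
  let mu : K[X] →ₗ[K] K := lcoeff K (Q.natDegree - 1) ∘ₗ modByMonicHom Q
  have hmu : ((Ideal.span {Q}).restrictScalars K) ≤ LinearMap.ker mu := by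
    intro f hf
    have hf' : Q ∣ f := Ideal.mem_span_singleton.1 hf
    have : f %ₘ Q = 0 := (modByMonic_eq_zero_iff_dvd hQ).2 hf'
    simp [mu, this]
  let lam : (K[X] ⧸ Ideal.span {Q}) →ₗ[K] K :=
    (((Ideal.span {Q}).restrictScalars K).liftQ mu hmu) ∘ₗ
      (Submodule.Quotient.restrictScalarsEquiv K (Ideal.span {Q})).symm.toLinearMap
  have hlam : ∀ f : K[X], lam (Ideal.Quotient.mk _ f) = mu f := fun f => rfl
  refine ⟨lam, fun x hx => ?_⟩
  obtain ⟨f, rfl⟩ := Ideal.Quotient.mk_surjective x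
  have hr : f %ₘ Q ≠ 0 := by
    intro h
    apply hx
    rw [Ideal.Quotient.eq_zero_iff_mem, Ideal.mem_span_singleton]
    exact (modByMonic_eq_zero_iff_dvd hQ).1 h
  have e : Ideal.Quotient.mk (Ideal.span {Q}) f = Ideal.Quotient.mk (Ideal.span {Q}) (f %ₘ Q) := by
    rw [Ideal.Quotient.eq, Ideal.mem_span_singleton]
    exact ⟨f /ₘ Q, by rw [modByMonic_eq_sub_mul_div]; ring⟩
  have hQ1 : Q ≠ 1 := by
    rintro h
    rw [h] at hr
    simp at hr
  have hlt := natDegree_modByMonic_lt f hQ hQ1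
  set r := f %ₘ Q with hrdef
  refine ⟨Ideal.Quotient.mk _ (X ^ (Q.natDegree - 1 - r.natDegree)), ?_⟩
  rw [e, ← map_mul, hlam]
  have hd : (X ^ (Q.natDegree - 1 - r.natDegree) * r).natDegree = Q.natDegree - 1 := by
    rw [natDegree_X_pow_mul _ hr]; omega
  have hm : (X ^ (Q.natDegree - 1 - r.natDegree) * r) %ₘ Q
      = X ^ (Q.natDegree - 1 - r.natDegree) * r := by
    rw [modByMonic_eq_self_iff hQ]
    apply degree_lt_degree
    omega
  simp only [mu, LinearMap.comp_apply, modByMonicHom_apply, lcoeff_apply]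
  rw [hm]
  have h0 : (X ^ (Q.natDegree - 1 - r.natDegree) * r).leadingCoeff ≠ 0 := by
    simpa using hr
  rwa [leadingCoeff, hd] at h0

open Polynomial in
lemma exists_symm_form {K V : Type} [Field K] [AddCommGroup V] [Module K V] [FiniteDimensional K V]
    (φ : V →ₗ[K] V) : ∃ B : V →ₗ[K] V →ₗ[K] K, (∀ x y, B x y = B y x) ∧
      (∀ x y, B (φ x) y = B x (φ y)) ∧ ∀ x, x ≠ 0 → ∃ y, B y x ≠ 0 := by
  classical
  obtain ⟨ι, _, p, hp, e, ⟨E⟩⟩ := Module.equiv_directSum_of_isTorsion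
    (Module.AEval.isTorsion_of_finiteDimensional K V φ)
  have := fun i => exists_frob_functional_s9 (p i ^ e i) (pow_ne_zero _ (hp i).ne_zero)
  choose lam hlam using this
  let Φ : V → ∀ i, (K[X] ⧸ Ideal.span {p i ^ e i}) := fun v i => E (Module.AEval'.of φ v) i
  have hadd : ∀ x y i, Φ (x + y) i = Φ x i + Φ y i := by
    intro x y i; simp [Φ]
  have hpoly : ∀ (f : K[X]) (z : Module.AEval K V φ) i, (E (f • z)) i =
      (Ideal.Quotient.mk (Ideal.span {p i ^ e i}) f * (E z i : K[X] ⧸ Ideal.span {p i ^ e i}) :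
        K[X] ⧸ Ideal.span {p i ^ e i}) := by
    intro f z i
    rw [map_smul]
    change f • (E z i) = _
    obtain ⟨w, hw⟩ := Ideal.Quotient.mk_surjective (I := Ideal.span {p i ^ e i}) (E z i)
    rw [← hw]
    rfl
  have hsmul : ∀ (c : K) x i, Φ (c • x) i = c • Φ x i := by
    intro c x i
    simp only [Φ]
    rw [map_smul, ← Module.AEval.C_smul, hpoly]
    exact (Algebra.smul_def (A := K[X] ⧸ Ideal.span {p i ^ e i}) c _).symm
  have hX : ∀ x i, Φ (φ x) i = Ideal.Quotient.mk _ (X : K[X]) * Φ x i := by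
    intro x i
    simp only [Φ]
    rw [← Module.AEval'.X_smul_of, hpoly]
  refine ⟨LinearMap.mk₂ K (fun x y => ∑ i, lam i (Φ x i * Φ y i)) ?_ ?_ ?_ ?_, ?_, ?_, ?_⟩
  · intro x x' y; simp [hadd, add_mul, Finset.sum_add_distrib]
  · intro c x y; simp only [hsmul, Finset.smul_sum, ← map_smul, smul_mul_assoc]
  · intro x x' y; simp [hadd, mul_add, Finset.sum_add_distrib]
  · intro c x y; simp only [hsmul, Finset.smul_sum, ← map_smul, mul_smul_comm]
  · intro x y; simp [mul_comm]
  · intro x y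
    simp only [LinearMap.mk₂_apply]
    refine Finset.sum_congr rfl fun i _ => ?_
    rw [hX, hX, mul_assoc, mul_left_comm]
  · intro x hx
    have : ∃ i, Φ x i ≠ 0 := by
      by_contra! h
      apply hx
      have : E (Module.AEval'.of φ x) = 0 := DFinsupp.ext h
      simpa using this
    obtain ⟨i, hi⟩ := this
    obtain ⟨y, hy⟩ := hlam i _ hi
    refine ⟨(Module.AEval'.of φ).symm (E.symm (DirectSum.of _ i y)), ?_⟩
    simp only [LinearMap.mk₂_apply]
    rw [Finset.sum_eq_single i]
    · simpa [Φ] using hy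
    · intro j _ hj
      have : Φ ((Module.AEval'.of φ).symm (E.symm (DirectSum.of _ i y))) j = 0 := by
        simp [Φ, DirectSum.of_eq_of_ne _ _ _ hj]
      rw [this]; simp
    · simp

lemma exists_symmetrizer {K m : Type} [Field K] [Fintype m] [DecidableEq m] (A : Matrix m m K) :
    ∃ S : Matrix m m K, S.transpose = S ∧ S.det ≠ 0 ∧ S * A = A.transpose * S := by
  obtain ⟨B, h1, h2, h3⟩ := exists_symm_form (Matrix.toLin' A)
  let S := LinearMap.toMatrix₂' K B
  have hS : Matrix.toLinearMap₂' K S = B := by simp [S]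
  refine ⟨S, ?_, ?_, ?_⟩
  · ext i j
    simp [S, h1]
  · intro h
    obtain ⟨v, hv, hv0⟩ := Matrix.exists_mulVec_eq_zero_iff.2 h
    obtain ⟨y, hy⟩ := h3 v hv
    apply hy
    rw [← hS, Matrix.toLinearMap₂'_apply', hv0]
    simp
  · have := (isAdjointPair_toLinearMap₂' S S A A).1 (by
      intro x y
      rw [hS]
      exact h2 x y)
    exact this.symm

open Matrix in
lemma orbit_blocks {K m : Type} [Field K] [Fintype m] [DecidableEq m] (A : Matrix m m K)
    (b : Matrix m (Fin 1) K) (c : Matrix (Fin 1) m K) (d : Matrix (Fin 1) (Fin 1) K)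
    (hg : (fromBlocks A b c d).det ≠ 0) :
    ∃ (S : Matrix m m K) (v : Matrix m (Fin 1) K), Sᵀ = S ∧ S.det ≠ 0 ∧ S * A = Aᵀ * S ∧
      S * b + Aᵀ * (S * v) = cᵀ := by
  obtain ⟨S, hS1, hS2, hS3⟩ := exists_symmetrizer A
  suffices h : ∃ z : K, z ≠ 0 ∧ ∃ y : Matrix m (Fin 1) K, Aᵀ * y = cᵀ - z • (S * b) by
    obtain ⟨z, hz, y, hy⟩ := h
    have hd : IsUnit (z • S).det := by
      rw [det_smul]; exact isUnit_iff_ne_zero.2 (mul_ne_zero (pow_ne_zero _ hz) hS2)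
    refine ⟨z • S, (z • S)⁻¹ * y, by simp [hS1], hd.ne_zero, by simp [hS3], ?_⟩
    rw [mul_nonsing_inv_cancel_left _ _ hd, hy]
    simp
  by_cases hA : A.det = 0
  · obtain ⟨k, hk, hk0⟩ := exists_mulVec_eq_zero_iff.2 hA
    -- c k ≠ 0
    let κ : Matrix m (Fin 1) K := of fun i _ => k i
    have hAκ : A * κ = 0 := by
      ext i j; simpa [Matrix.mul_apply, mulVec, dotProduct, κ] using congrFun hk0 i
    have hκ : κ ≠ 0 := by
      intro h; apply hk; ext i; simpa [κ] using congrFun (congrFun h i) 0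
    have s1 : ∀ M : Matrix (Fin 1) (Fin 1) K, M 0 0 = 0 → M = 0 := by
      intro M h; ext i j; fin_cases i; fin_cases j; simpa using h
    have hck : (c * κ) 0 0 ≠ 0 := by
      intro h
      have h0 := s1 _ h
      have : fromBlocks A b c d * fromRows κ (0 : Matrix (Fin 1) (Fin 1) K) = 0 := by
        rw [fromBlocks_mul_fromRows]; simp [hAκ, h0]
      have h1 : fromRows κ (0 : Matrix (Fin 1) (Fin 1) K) = 0 := by
        have := congrArg ((fromBlocks A b c d)⁻¹ * ·) this
        simpa [nonsing_inv_mul_cancel_left _ _ (isUnit_iff_ne_zero.2 hg)] using this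
      apply hκ
      rw [← toRows₁_fromRows κ (0 : Matrix (Fin 1) (Fin 1) K), h1]; rfl
    have hkb : (κᵀ * (S * b)) 0 0 ≠ 0 := by
      intro h
      have h0 := s1 _ h
      have : fromCols (κᵀ * S) (0 : Matrix (Fin 1) (Fin 1) K) * fromBlocks A b c d = 0 := by
        rw [fromCols_mul_fromBlocks, Matrix.mul_assoc, hS3, ← Matrix.mul_assoc, ← transpose_mul,
          hAκ, Matrix.mul_assoc, h0]
        simp
      have h1 : fromCols (κᵀ * S) (0 : Matrix (Fin 1) (Fin 1) K) = 0 := by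
        have := congrArg (· * (fromBlocks A b c d)⁻¹) this
        simpa [mul_nonsing_inv_cancel_right _ _ (isUnit_iff_ne_zero.2 hg)] using this
      have h2 : κᵀ * S = 0 := by
        rw [← toCols₁_fromCols (κᵀ * S) (0 : Matrix (Fin 1) (Fin 1) K), h1]; rfl
      have h3 : κᵀ = 0 := by
        have := congrArg (· * S⁻¹) h2
        simpa [mul_nonsing_inv_cancel_right _ _ (isUnit_iff_ne_zero.2 hS2)] using this
      exact hκ (by simpa using congrArg transpose h3)
    refine ⟨(c * κ) 0 0 / (κᵀ * (S * b)) 0 0, div_ne_zero hck hkb, ?_⟩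
    set z := (c * κ) 0 0 / (κᵀ * (S * b)) 0 0
    set y := cᵀ - z • (S * b)
    have hky : κᵀ * y = 0 := by
      apply s1
      have : (κᵀ * cᵀ) 0 0 = (c * κ) 0 0 := by rw [← transpose_mul]; rfl
      simp only [y, Matrix.mul_sub, Matrix.mul_smul, Matrix.sub_apply, Matrix.smul_apply, smul_eq_mul, this, z]
      field_simp
      ring
    -- solve gᵀ (p; r) = (y; 0)
    let M := ((fromBlocks A b c d)ᵀ)⁻¹ * fromRows y (0 : Matrix (Fin 1) (Fin 1) K)
    have hM : (fromBlocks A b c d)ᵀ * M = fromRows y 0 := by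
      apply mul_nonsing_inv_cancel_left
      rw [det_transpose]; exact isUnit_iff_ne_zero.2 hg
    rw [← fromRows_toRows M, fromBlocks_transpose, fromBlocks_mul_fromRows, fromRows_ext_iff] at hM
    obtain ⟨e1, -⟩ := hM
    have e2 : κᵀ * (cᵀ * M.toRows₂) = 0 := by
      have := congrArg (κᵀ * ·) e1
      simpa [Matrix.mul_add, hky, ← Matrix.mul_assoc, ← transpose_mul, hAκ] using this
    have e3 : M.toRows₂ = 0 := by
      apply s1
      have := congrFun (congrFun e2 0) 0
      rw [← Matrix.mul_assoc, ← transpose_mul] at this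
      rw [Matrix.mul_apply, Fin.sum_univ_one, transpose_apply] at this
      exact (mul_eq_zero.1 this).resolve_left hck
    exact ⟨M.toRows₁, by simpa [e3] using e1⟩
  · refine ⟨1, one_ne_zero, Aᵀ⁻¹ * (cᵀ - (1:K) • (S * b)), ?_⟩
    apply mul_nonsing_inv_cancel_left
    rw [det_transpose]; exact isUnit_iff_ne_zero.2 hA

open Matrix in
lemma block_identity {K m : Type} [Field K] [Fintype m] [DecidableEq m] (A : Matrix m m K)
    (b : Matrix m (Fin 1) K) (c : Matrix (Fin 1) m K) (d : Matrix (Fin 1) (Fin 1) K)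
    (S : Matrix m m K) (v : Matrix m (Fin 1) K) (hS : Sᵀ = S) (hA : S * A = Aᵀ * S)
    (h : S * b + Aᵀ * (S * v) = cᵀ) :
    (fromBlocks A b c d)ᵀ * fromBlocks S 0 0 1 =
      fromBlocks S 0 0 1 * fromBlocks 1 0 (-(vᵀ * S)) 1 * fromBlocks A b c d * fromBlocks 1 v 0 1 := by
  have s1 : ∀ M : Matrix (Fin 1) (Fin 1) K, Mᵀ = M := by
    intro M; ext i j; fin_cases i; fin_cases j; rfl
  have hc : c = bᵀ * S + vᵀ * (S * A) := by
    rw [← transpose_transpose c, ← h]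
    simp [hS, Matrix.mul_assoc]
  have hb : vᵀ * (S * b) = bᵀ * (S * v) := by
    rw [← s1 (vᵀ * (S * b))]
    simp [hS, Matrix.mul_assoc]
  rw [fromBlocks_transpose]
  simp only [fromBlocks_multiply, s1 d]
  congr 1
  · simp [hA]
  · rw [← h]; simp [← hA, Matrix.mul_add, Matrix.mul_assoc, add_comm, ← Matrix.mul_assoc]
  · simp [hc, Matrix.mul_assoc]
  · simp [hc, Matrix.mul_assoc, Matrix.add_mul, hb]

/-- transpose on the general linear group -/
def glT {K m : Type} [Field K] [Fintype m] [DecidableEq m] (g : GL m K) : GL m K where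
  val := (g : Matrix m m K).transpose
  inv := ((g⁻¹ : GL m K) : Matrix m m K).transpose
  val_inv := by rw [← Matrix.transpose_mul, ← Units.val_mul]; simp
  inv_val := by rw [← Matrix.transpose_mul, ← Units.val_mul]; simp

lemma glT_val {K m : Type} [Field K] [Fintype m] [DecidableEq m] (g : GL m K) :
    (glT g : Matrix m m K) = (g : Matrix m m K).transpose := rfl

lemma glT_mul {K m : Type} [Field K] [Fintype m] [DecidableEq m] (a b : GL m K) :
    glT (a * b) = glT b * glT a := by
  apply Units.ext
  simp [glT_val]

lemma glT_glT {K m : Type} [Field K] [Fintype m] [DecidableEq m] (a : GL m K) :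
    glT (glT a) = a := by
  apply Units.ext
  simp [glT_val]

lemma glT_conj {K m : Type} [Field K] [Fintype m] [DecidableEq m] (a : GL m K) :
    IsConj a (glT a) := by
  obtain ⟨S, -, h2, h3⟩ := exists_symmetrizer (a : Matrix m m K)
  rw [isConj_iff]
  refine ⟨Matrix.GeneralLinearGroup.mkOfDetNeZero S h2, ?_⟩
  rw [mul_inv_eq_iff_eq_mul]
  apply Units.ext
  exact h3

open Matrix in
lemma orbit_GL {n : ℕ} (g : GLn F (n + 1)) :
    ∃ (l : GLn F n × GLn F 1) (u u' : GLn F (n + 1)), IsUcol F u ∧ IsUcol F (glT u') ∧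
      glT g * (blockDiagGL F l.1 l.2 : GLn F (n + 1)) =
        (blockDiagGL F l.1 l.2 : GLn F (n + 1)) * u' * g * u := by
  let E : Fin n ⊕ Fin 1 ≃ Fin (n + 1) := finSumFinEquiv
  let M : Matrix (Fin n ⊕ Fin 1) (Fin n ⊕ Fin 1) F := (g : Matrix _ _ F).submatrix E E
  have hM : M = fromBlocks M.toBlocks₁₁ M.toBlocks₁₂ M.toBlocks₂₁ M.toBlocks₂₂ :=
    (fromBlocks_toBlocks M).symm
  have hgM : (g : Matrix _ _ F) = M.submatrix E.symm E.symm := by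
    ext i j; simp [M]
  have hdet : M.det ≠ 0 := by
    simp only [M, det_submatrix_equiv_self]
    exact ((Matrix.isUnit_iff_isUnit_det _).mp g.isUnit).ne_zero
  rw [hM] at hdet
  obtain ⟨S, v, hS1, hS2, hS3, hv⟩ := orbit_blocks _ _ _ _ hdet
  have key := block_identity _ _ _ M.toBlocks₂₂ S v hS1 hS3 hv
  rw [← hM] at key
  let u : GLn F (n + 1) := Matrix.GeneralLinearGroup.mkOfDetNeZero
    ((fromBlocks 1 v 0 1).submatrix E.symm E.symm) (by
      rw [det_submatrix_equiv_self, det_fromBlocks_zero₂₁]; simp)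
  let u' : GLn F (n + 1) := Matrix.GeneralLinearGroup.mkOfDetNeZero
    ((fromBlocks 1 0 (-(vᵀ * S)) 1).submatrix E.symm E.symm) (by
      rw [det_submatrix_equiv_self, det_fromBlocks_zero₁₂]; simp)
  have hU : ∀ (w : Matrix (Fin n) (Fin 1) F) (x : GLn F (n + 1)),
      (x : Matrix _ _ F) = (fromBlocks 1 w 0 1).submatrix E.symm E.symm → IsUcol F x := by
    intro w x hx
    constructor
    · intro i
      rw [hx]
      obtain ⟨i, rfl⟩ := E.surjective i
      rcases i with i | i <;> simp
    · intro i j hij hj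
      rw [hx]
      obtain ⟨i, rfl⟩ := E.surjective i
      obtain ⟨j, rfl⟩ := E.surjective j
      rcases j with j | j
      · rcases i with i | i
        · have : i ≠ j := fun h => hij (by rw [h])
          simp [this]
        · simp
      · exfalso; apply hj
        fin_cases j
        simp [E, Fin.ext_iff]
  refine ⟨(Matrix.GeneralLinearGroup.mkOfDetNeZero S hS2, 1), u, u', hU v u rfl,
    hU (-(vᵀ * S))ᵀ _ ?_, ?_⟩
  · change ((fromBlocks 1 0 (-(vᵀ * S)) 1).submatrix E.symm E.symm)ᵀ = _
    rw [transpose_submatrix, fromBlocks_transpose]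
    simp
  · apply Units.ext
    have hb : ((blockDiagGL F (Matrix.GeneralLinearGroup.mkOfDetNeZero S hS2) (1 : GLn F 1) :
        GLn F (n + 1)) : Matrix _ _ F) = (fromBlocks S 0 0 1).submatrix E.symm E.symm := rfl
    have hu : (u : Matrix _ _ F) = (fromBlocks 1 v 0 1).submatrix E.symm E.symm := rfl
    have hu' : (u' : Matrix _ _ F) =
      (fromBlocks 1 0 (-(vᵀ * S)) 1).submatrix E.symm E.symm := rfl
    simp only [Units.val_mul, glT_val, hb, hu, hu', hgM, transpose_submatrix,
      submatrix_mul_equiv, key]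

lemma glT_blockDiag {n : ℕ} (l : GLn F n × GLn F 1) :
    glT (blockDiagGL F l.1 l.2 : GLn F (n + 1)) = blockDiagGL F (glT l.1) (glT l.2) := by
  apply Units.ext
  change ((Matrix.fromBlocks l.1.val 0 0 l.2.val).submatrix
      finSumFinEquiv.symm finSumFinEquiv.symm).transpose =
    (Matrix.fromBlocks l.1.val.transpose 0 0
      l.2.val.transpose).submatrix finSumFinEquiv.symm finSumFinEquiv.symm
  rw [Matrix.transpose_submatrix, Matrix.fromBlocks_transpose]
  simp

/-- **Multiplicity-freeness of parabolic branching**: for every irreducible complex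
representation `(π, V)` of `GL(n+1,q)` and every irreducible complex representation `(σ, W)`
of `GL(n,q) × GL(1,q)`, the representation `σ` occurs in the `GL(n,q) × GL(1,q)`-representation
`V^U` with multiplicity at most `1`. -/
theorem parabolic_branching_multiplicity_free (n : ℕ)
    (V : Type) [AddCommGroup V] [Module ℂ V] [FiniteDimensional ℂ V] [Nontrivial V]
    (π : Representation ℂ (GLn F (n + 1)) V)
    (hπ : ∀ S : Submodule ℂ V, (∀ g : GLn F (n + 1), ∀ v ∈ S, π g v ∈ S) → S = ⊥ ∨ S = ⊤)
    (W : Type) [AddCommGroup W] [Module ℂ W] [FiniteDimensional ℂ W] [Nontrivial W]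
    (σ : Representation ℂ (GLn F n × GLn F 1) W)
    (hσ : ∀ S : Submodule ℂ W, (∀ h : GLn F n × GLn F 1, ∀ w ∈ S, σ h w ∈ S) → S = ⊥ ∨ S = ⊤) :
    Module.finrank ℂ (homSpace F π σ) ≤ 1 := by
  have := irr_of_hyp π hπ
  have := irr_of_hyp σ hσ
  by_cases h0 : ∃ f : homSpace F π σ, f ≠ 0
  · obtain ⟨f, hf⟩ := h0
    refine finrank_le_one f fun f' => ?_
    obtain ⟨c, hc⟩ := gelfand_core π σ glT glT_mul glT_glT glT_conj
      (fun l => (glT l.1, glT l.2)) (fun a b => by simp [glT_mul]) (fun a => by simp [glT_glT])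
      (fun l => by
        obtain ⟨x, hx⟩ := isConj_iff.1 (glT_conj l.1)
        obtain ⟨y, hy⟩ := isConj_iff.1 (glT_conj l.2)
        exact isConj_iff.2 ⟨(x, y), Prod.ext hx hy⟩)
      (fun l => (blockDiagGL F l.1 l.2 : GLn F (n + 1))) (glT_blockDiag F) (IsUcol F)
      (orbit_GL F) f.1 f'.1 (fun u hu w => f.2.1 w u hu) f.2.2
      (fun u hu w => f'.2.1 w u hu) f'.2.2 (fun h => hf (Subtype.ext h))
    exact ⟨c, Subtype.ext hc⟩
  · push Not at h0
    have : Subsingleton (homSpace F π σ) := ⟨fun a b => by rw [h0 a, h0 b]⟩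
    rw [Module.finrank_zero_of_subsingleton]
    exact zero_le_one
end

section
/- Let 0 ≤ n ≤ k, identify F_q^ℓ (for ℓ ≤ k) with the span of the first ℓ standard basis vectors of F_q^k, fix a subspace Y ⊆ F_q^n, and fix integers d_n ≤ d_{n+1} ≤ ... ≤ d_k with d_n = dim Y and d_ℓ − d_{ℓ−1} ∈ {0,1} for n < ℓ ≤ k. Then the number of subspaces Z ⊆ F_q^k satisfying Z ∩ F_q^n = Y and dim(Z ∩ F_q^ℓ) = d_ℓ for all n ≤ ℓ ≤ k equals q^{Σ_{ℓ=n+1}^k ℓ·(d_ℓ − d_{ℓ−1}) − (d_k(d_k+1)/2 − d_n(d_n+1)/2)}. (The counting formula for the constant M established in the proof of Theorem 5.11.) -/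
variable (F : Type) [Field F] [Fintype F] [DecidableEq F]

/-- The coordinate subspace `V_i ⊆ F_q^n` spanned by the first `i` standard basis vectors
(the functions vanishing on the coordinates of index `≥ i`). -/
def coordSub (n : ℕ) (i : ℕ) : Submodule F (Fin n → F) where
  carrier := {v | ∀ j : Fin n, i ≤ (j : ℕ) → v j = 0}
  add_mem' := by
    intro a b ha hb j hj
    simp [ha j hj, hb j hj]
  zero_mem' := by
    intro j hj
    rfl
  smul_mem' := by
    intro c v hv j hj
    simp [hv j hj]

section Aux

theorem aux_finrank {F V : Type} [Field F] [AddCommGroup V] [Module F V] [FiniteDimensional F V]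
    (W : Submodule F V) (v : V) (hv : v ∉ W) :
    Module.finrank F ↥(W ⊔ Submodule.span F {v}) = Module.finrank F W + 1 := by
  have h := Submodule.finrank_sup_add_finrank_inf_eq W (Submodule.span F {v})
  have hv0 : v ≠ 0 := fun h0 => hv (h0 ▸ W.zero_mem)
  have hd : W ⊓ Submodule.span F {v} = ⊥ :=
    disjoint_iff.1 ((Submodule.disjoint_span_singleton' hv0).2 hv)
  rw [hd, finrank_bot, finrank_span_singleton hv0] at h
  simpa using h

theorem aux_count {F V : Type} [Field F] [Fintype F] [AddCommGroup V] [Module F V]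
    [FiniteDimensional F V] (P W : Submodule F V) (hW : W ≤ P) (e : V) (he : e ∉ P) :
    Nat.card {Z : Submodule F V // Z ≤ P ⊔ Submodule.span F {e} ∧ Z ⊓ P = W ∧
      Module.finrank F Z = Module.finrank F W + 1} =
      Fintype.card F ^ (Module.finrank F P - Module.finrank F W) := by
  have heu : ∀ u ∈ P, e + u ∉ P := fun u hu h => he (by simpa using P.sub_mem h hu)
  have hinf : ∀ u ∈ P, (W ⊔ Submodule.span F {e + u}) ⊓ P = W := by
    intro u hu
    apply le_antisymm
    · rintro z ⟨hz, hzP⟩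
      obtain ⟨w, hw, y, hy, rfl⟩ := Submodule.mem_sup.1 hz
      obtain ⟨c, rfl⟩ := Submodule.mem_span_singleton.1 hy
      have h1 : c • (e + u) ∈ P := by simpa using P.sub_mem hzP (hW hw)
      by_cases hc : c = 0
      · simpa [hc] using hw
      · exact absurd ((P.smul_mem_iff hc).1 h1) (heu u hu)
    · exact le_inf le_sup_left hW
  let g : P → {Z : Submodule F V // Z ≤ P ⊔ Submodule.span F {e} ∧ Z ⊓ P = W ∧
      Module.finrank F Z = Module.finrank F W + 1} := fun u =>
    ⟨W ⊔ Submodule.span F {e + (u : V)}, by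
      refine sup_le (hW.trans le_sup_left) ?_
      rw [Submodule.span_singleton_le_iff_mem]
      exact add_mem (Submodule.mem_sup_right (Submodule.mem_span_singleton_self e))
        (Submodule.mem_sup_left u.2), hinf u u.2,
      aux_finrank W _ (fun h => heu u u.2 (hW h))⟩
  let W' : Submodule F P := W.comap P.subtype
  have hg : ∀ a b : P, g a = g b ↔ a - b ∈ W' := by
    intro a b
    constructor
    · intro h
      have h' : W ⊔ Submodule.span F {e + (a : V)} = W ⊔ Submodule.span F {e + (b : V)} :=
        congrArg Subtype.val h
      have h1 : e + (a : V) ∈ W ⊔ Submodule.span F {e + (b : V)} := by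
        rw [← h']; exact Submodule.mem_sup_right (Submodule.mem_span_singleton_self _)
      have h2 : e + (b : V) ∈ W ⊔ Submodule.span F {e + (b : V)} :=
        Submodule.mem_sup_right (Submodule.mem_span_singleton_self _)
      have h3 : (a : V) - b ∈ W ⊔ Submodule.span F {e + (b : V)} := by
        simpa using sub_mem h1 h2
      change (a : V) - b ∈ W
      rw [← hinf b b.2]
      exact ⟨h3, P.sub_mem a.2 b.2⟩
    · intro h
      have key : ∀ a b : P, (a : V) - b ∈ W →
          W ⊔ Submodule.span F {e + (a : V)} ≤ W ⊔ Submodule.span F {e + (b : V)} := by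
        intro a b h
        refine sup_le le_sup_left ?_
        rw [Submodule.span_singleton_le_iff_mem]
        have : e + (a : V) = ((a : V) - b) + (e + b) := by abel
        rw [this]
        exact add_mem (Submodule.mem_sup_left h)
          (Submodule.mem_sup_right (Submodule.mem_span_singleton_self _))
      have h : (a : V) - b ∈ W := h
      apply Subtype.ext
      refine le_antisymm (key a b h) (key b a ?_)
      simpa using W.neg_mem h
  have hsurj : Function.Surjective g := by
    rintro ⟨Z, hZ, hZP, hZf⟩
    have hnot : ¬ Z ≤ P := by
      intro h
      rw [inf_eq_left.2 h] at hZP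
      rw [hZP] at hZf
      omega
    obtain ⟨z, hz, hzP⟩ := SetLike.not_le_iff_exists.1 hnot
    obtain ⟨p, hp, y, hy, rfl⟩ := Submodule.mem_sup.1 (hZ hz)
    obtain ⟨c, rfl⟩ := Submodule.mem_span_singleton.1 hy
    have hc : c ≠ 0 := by
      rintro rfl
      exact hzP (by simpa using hp)
    have hu : e + c⁻¹ • p ∈ Z := by
      have := Z.smul_mem c⁻¹ hz
      rw [smul_add, smul_smul, inv_mul_cancel₀ hc, one_smul, add_comm] at this
      exact this
    refine ⟨⟨c⁻¹ • p, P.smul_mem _ hp⟩, ?_⟩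
    apply Subtype.ext
    have hle : W ⊔ Submodule.span F {e + c⁻¹ • p} ≤ Z := by
      refine sup_le (hZP ▸ inf_le_left) ?_
      rwa [Submodule.span_singleton_le_iff_mem]
    refine Submodule.eq_of_le_of_finrank_eq hle ?_
    rw [hZf]
    exact aux_finrank W _ (fun h => heu _ (P.smul_mem _ hp) (hW h))
  have hbij : Function.Bijective (Quotient.lift (s := W'.quotientRel) g
      (fun a b h => (hg a b).2 ((Submodule.quotientRel_def W').1 h))) := by
    constructor
    · rintro ⟨a⟩ ⟨b⟩ h
      exact Quotient.sound ((Submodule.quotientRel_def W').2 ((hg a b).1 h))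
    · intro z
      obtain ⟨a, rfl⟩ := hsurj z
      exact ⟨Quotient.mk _ a, rfl⟩
  rw [← Nat.card_eq_of_bijective _ hbij]
  change Nat.card (P ⧸ W') = _
  rw [Module.natCard_eq_pow_finrank (K := F), Nat.card_eq_fintype_card]
  congr 1
  have h1 := Submodule.finrank_quotient_add_finrank W'
  have h2 : Module.finrank F W' = Module.finrank F W :=
    (Submodule.comapSubtypeEquivOfLe hW).finrank_eq
  omega

theorem aux_count0 {F V : Type} [Field F] [AddCommGroup V] [Module F V]
    [FiniteDimensional F V] (P Q W : Submodule F V) (hW : W ≤ P) (hPQ : P ≤ Q) :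
    Nat.card {Z : Submodule F V // Z ≤ Q ∧ Z ⊓ P = W ∧
      Module.finrank F Z = Module.finrank F W} = 1 := by
  rw [Nat.card_eq_one_iff_unique]
  constructor
  · constructor
    rintro ⟨Z, h1, h2, h3⟩ ⟨Z', h1', h2', h3'⟩
    apply Subtype.ext
    have a : W = Z := Submodule.eq_of_le_of_finrank_eq (h2 ▸ inf_le_left) h3.symm
    have b : W = Z' := Submodule.eq_of_le_of_finrank_eq (h2' ▸ inf_le_left) h3'.symm
    exact a.symm.trans b
  · exact ⟨⟨W, hW.trans hPQ, inf_eq_left.2 hW, rfl⟩⟩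

theorem coordSub_mono {F : Type} [Field F] (k i j : ℕ) (h : i ≤ j) :
    coordSub F k i ≤ coordSub F k j :=
  fun _ hv t ht => hv t (h.trans ht)

theorem coordSub_top {F : Type} [Field F] (k : ℕ) : coordSub F k k = ⊤ := by
  rw [eq_top_iff]
  intro v _ t ht
  have := t.2
  omega

theorem coordSub_single {F : Type} [Field F] (k m : ℕ) (h : m < k) :
    (Pi.single ⟨m, h⟩ 1 : Fin k → F) ∉ coordSub F k m := by
  intro h1
  have := h1 ⟨m, h⟩ le_rfl
  simp at this

theorem coordSub_succ {F : Type} [Field F] (k m : ℕ) (h : m < k) :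
    coordSub F k (m + 1) =
      coordSub F k m ⊔ Submodule.span F {(Pi.single ⟨m, h⟩ 1 : Fin k → F)} := by
  apply le_antisymm
  · intro v hv
    rw [Submodule.mem_sup]
    refine ⟨v - v ⟨m, h⟩ • Pi.single ⟨m, h⟩ 1, ?_, v ⟨m, h⟩ • Pi.single ⟨m, h⟩ 1,
      Submodule.smul_mem _ _ (Submodule.mem_span_singleton_self _), by simp⟩
    intro t ht
    by_cases htm : t = ⟨m, h⟩
    · subst htm; simp
    · have h2 : (t : ℕ) ≠ m := fun h3 => htm (Fin.ext h3)
      have := hv t (by omega)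
      simp [htm, this]
  · refine sup_le (coordSub_mono k _ _ (Nat.le_succ m)) ?_
    rw [Submodule.span_singleton_le_iff_mem]
    intro t ht
    have h2 : t ≠ ⟨m, h⟩ := by rintro rfl; simp at ht
    simp [h2]

theorem coordSub_finrank {F : Type} [Field F] (k m : ℕ) (h : m ≤ k) :
    Module.finrank F (coordSub F k m) = m := by
  induction m with
  | zero =>
    have : coordSub F k 0 = ⊥ := by
      rw [eq_bot_iff]
      intro v hv
      rw [Submodule.mem_bot]
      ext t
      exact hv t (Nat.zero_le _)
    rw [this, finrank_bot]
  | succ m ih =>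
    rw [coordSub_succ k m h, aux_finrank _ _ (coordSub_single k m h), ih (by omega)]

theorem tri_succ (x : ℕ) : (x + 1) * (x + 1 + 1) / 2 = x * (x + 1) / 2 + (x + 1) := by
  have : (x + 1) * (x + 1 + 1) = x * (x + 1) + (x + 1) * 2 := by ring
  rw [this, Nat.add_mul_div_right _ _ (by norm_num)]

theorem aux_main {F : Type} [Field F] [Fintype F] (n k : ℕ)
    (Y : Submodule F (Fin k → F)) (hY : Y ≤ coordSub F k n)
    (d : ℕ → ℕ) (hdn : d n = Module.finrank F ↥Y)
    (hstep : ∀ ℓ : ℕ, n < ℓ → ℓ ≤ k → d (ℓ - 1) ≤ d ℓ ∧ d ℓ ≤ d (ℓ - 1) + 1)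
    (m : ℕ) (hnm : n ≤ m) (hmk : m ≤ k) :
    ∃ a : ℕ, Nat.card {Z : Submodule F (Fin k → F) // Z ≤ coordSub F k m ∧
        Z ⊓ coordSub F k n = Y ∧
        ∀ ℓ : ℕ, n ≤ ℓ → ℓ ≤ m → Module.finrank F ↥(Z ⊓ coordSub F k ℓ) = d ℓ}
      = Fintype.card F ^ a ∧
      a + d m * (d m + 1) / 2 =
        (∑ ℓ ∈ Finset.Icc (n + 1) m, ℓ * (d ℓ - d (ℓ - 1))) + d n * (d n + 1) / 2 ∧
      d m ≤ m ∧ d n * (d n + 1) / 2 ≤ d m * (d m + 1) / 2 := by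
  induction m, hnm using Nat.le_induction with
  | base =>
    refine ⟨0, ?_, by simp, ?_, le_rfl⟩
    · rw [pow_zero, Nat.card_eq_one_iff_unique]
      constructor
      · constructor
        rintro ⟨Z, h1, h2, h3⟩ ⟨Z', h1', h2', h3'⟩
        apply Subtype.ext
        rw [inf_eq_left.2 h1] at h2
        rw [inf_eq_left.2 h1'] at h2'
        exact h2.trans h2'.symm
      · refine ⟨⟨Y, hY, inf_eq_left.2 hY, ?_⟩⟩
        intro ℓ h1 h2
        obtain rfl : n = ℓ := le_antisymm h1 h2
        rw [inf_eq_left.2 hY, hdn]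
    · rw [hdn, ← coordSub_finrank (F := F) k n hmk]
      exact Submodule.finrank_mono hY
  | succ m hnm ih =>
    obtain ⟨a, ha, hsum, hdm, htri⟩ := ih (by omega)
    have hs := hstep (m + 1) (by omega) hmk
    rw [Nat.add_sub_cancel] at hs
    let S : ℕ → Type := fun m => {Z : Submodule F (Fin k → F) // Z ≤ coordSub F k m ∧
        Z ⊓ coordSub F k n = Y ∧
        ∀ ℓ : ℕ, n ≤ ℓ → ℓ ≤ m → Module.finrank F ↥(Z ⊓ coordSub F k ℓ) = d ℓ}
    have hmm : ∀ (Z : Submodule F (Fin k → F)) (ℓ : ℕ), ℓ ≤ m →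
        Z ⊓ coordSub F k m ⊓ coordSub F k ℓ = Z ⊓ coordSub F k ℓ := by
      intro Z ℓ hℓ
      rw [inf_assoc, inf_eq_right.2 (coordSub_mono k _ _ hℓ)]
    let f : S (m + 1) → S m := fun Z => ⟨Z.1 ⊓ coordSub F k m, inf_le_right, by
      rw [hmm _ _ hnm]; exact Z.2.2.1, by
      intro ℓ h1 h2
      rw [hmm _ _ h2]; exact Z.2.2.2 ℓ h1 (by omega)⟩
    have hWf : ∀ W : S m, Module.finrank F W.1 = d m := by
      intro W
      have := W.2.2.2 m hnm le_rfl
      rwa [inf_eq_left.2 W.2.1] at this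
    have hfib : ∀ W : S m, Nat.card {Z : S (m + 1) // f Z = W} =
        Nat.card {Z : Submodule F (Fin k → F) // Z ≤ coordSub F k (m + 1) ∧
          Z ⊓ coordSub F k m = W.1 ∧ Module.finrank F Z = d (m + 1)} := by
      intro W
      refine Nat.card_congr ⟨fun Z => ⟨Z.1.1, Z.1.2.1, congrArg Subtype.val Z.2, ?_⟩,
        fun Z => ⟨⟨Z.1, Z.2.1, ?_, ?_⟩, Subtype.ext Z.2.2.1⟩, fun Z => rfl, fun Z => rfl⟩
      · have := Z.1.2.2.2 (m + 1) (by omega) le_rfl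
        rwa [inf_eq_left.2 Z.1.2.1] at this
      · rw [← hmm _ _ hnm, Z.2.2.1]; exact W.2.2.1
      · intro ℓ h1 h2
        rcases Nat.lt_or_ge m ℓ with h | h
        · obtain rfl : ℓ = m + 1 := by omega
          rw [inf_eq_left.2 Z.2.1]; exact Z.2.2.2
        · rw [← hmm _ _ h, Z.2.2.1]; exact W.2.2.2 ℓ h1 h
    have hfin : ∀ m, Finite (S m) := fun m => Subtype.finite
    have hcard : ∀ b : ℕ, (∀ W : S m, Nat.card {Z : S (m + 1) // f Z = W} =
        Fintype.card F ^ b) → Nat.card (S (m + 1)) = Fintype.card F ^ (a + b) := by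
      intro b hb
      have := Fintype.ofFinite (S m)
      rw [← Nat.card_congr (Equiv.sigmaFiberEquiv f), Nat.card_sigma,
        Finset.sum_congr rfl (fun W _ => hb W), Finset.sum_const, Finset.card_univ,
        ← Nat.card_eq_fintype_card, smul_eq_mul, pow_add, ← ha]
    rw [Finset.sum_Icc_succ_top (by omega), Nat.add_sub_cancel]
    rcases (by omega : d (m + 1) = d m ∨ d (m + 1) = d m + 1) with h | h
    · refine ⟨a + 0, hcard 0 ?_, ?_, by omega, by rw [h]; exact htri⟩
      · intro W
        rw [hfib, h, ← hWf W]
        exact aux_count0 _ _ _ W.2.1 (coordSub_mono k _ _ (Nat.le_succ m))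
      · rw [h, Nat.sub_self]; omega
    · refine ⟨a + (m - d m), hcard _ ?_, ?_, by omega, ?_⟩
      · intro W
        rw [hfib, h, ← hWf W, coordSub_succ k m hmk,
          aux_count _ _ W.2.1 _ (coordSub_single k m hmk), coordSub_finrank k m (by omega)]
      · rw [h, tri_succ, Nat.add_sub_cancel_left]; omega
      · rw [h, tri_succ]; omega

end Aux

/-- **The counting formula for the constant `M`** established in the proof of Theorem 5.11:
the number of subspaces `Z ⊆ F_q^k` with prescribed intersection with `F_q^n` and prescribed
intermediate dimensions `dim(Z ∩ F_q^ℓ) = d_ℓ` (`n ≤ ℓ ≤ k`). -/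
theorem extension_counting (n k : ℕ) (hnk : n ≤ k)
    (Y : Submodule F (Fin k → F)) (hY : Y ≤ coordSub F k n)
    (d : ℕ → ℕ)
    (hdn : d n = Module.finrank F ↥Y)
    (hstep : ∀ ℓ : ℕ, n < ℓ → ℓ ≤ k → d (ℓ - 1) ≤ d ℓ ∧ d ℓ ≤ d (ℓ - 1) + 1) :
    Nat.card {Z : Submodule F (Fin k → F) //
        Z ⊓ coordSub F k n = Y ∧
        ∀ ℓ : ℕ, n ≤ ℓ → ℓ ≤ k → Module.finrank F ↥(Z ⊓ coordSub F k ℓ) = d ℓ}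
      = (Fintype.card F) ^
          ((∑ ℓ ∈ Finset.Icc (n + 1) k, ℓ * (d ℓ - d (ℓ - 1)))
            - (d k * (d k + 1) / 2 - d n * (d n + 1) / 2)) := by
  obtain ⟨a, ha, hsum, -, htri⟩ := aux_main n k Y hY d hdn hstep k hnk le_rfl
  have hle : ∀ Z : Submodule F (Fin k → F), Z ≤ coordSub F k k := by
    intro Z; rw [coordSub_top]; exact le_top
  simp only [hle, true_and] at ha
  rw [ha]
  congr 1
  omega
end
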